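/- Let n ≥ 2. Then: |ℱ̄ₙ(−)| = 0; |ℬ̄ₙ(−)| = Σ_{k=1}^{n−1} |𝒜̄_k(+, ×, ÷)| · |ℱ̄_{n−k}(+, ×, ÷)| − |𝒞̄ₙ(−)|; and |𝒞̄ₙ(−)| = Σ_{k=1}^{⌊n/2⌋} |𝒞̄_{n−2k}(+, ×, ÷)| · |ℱ̄_k(+, ×, ÷)|, where by convention |𝒞̄₀(+, ×, ÷)| = 1. -/

import Mathlib

/- Common framework: `K = ℝ(x₁,x₂,…)` is the field of rational functions over `ℝ` in
countably many variables (the fraction field of `MvPolynomial ℕ ℝ`), arithmetic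
expressions, the permutation action, isomorphism, types, the `EndsWith` classification,
multilinear forms and monicity, isomorphism classes and their counting. -/

open MvPolynomial

noncomputable section

abbrev P : Type := MvPolynomial ℕ ℝ
abbrev K : Type := FractionRing P

def toK : P →+* K := algebraMap P K

/-- The variable `xᵢ`, as an element of `K`. -/
def Xv (i : ℕ) : K := toK (X i)

/-- `Vars f` : the set of variables on which `f` depends, i.e. the variables occurring in a
representation of `f` as a quotient of two coprime polynomials. -/
def Vars (f : K) : Set ℕ :=
  {i | ∃ p q : P, q ≠ 0 ∧ IsRelPrime p q ∧ f = toK p / toK q ∧ (i ∈ p.vars ∨ i ∈ q.vars)}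

/-- `𝒜` : the smallest subset of `K` containing every variable and closed under the four
binary operations applied to expressions with disjoint variable sets. -/
inductive IsAE : K → Prop
  | var (i : ℕ) : IsAE (Xv i)
  | add {g h : K} : IsAE g → IsAE h → Disjoint (Vars g) (Vars h) → IsAE (g + h)
  | sub {g h : K} : IsAE g → IsAE h → Disjoint (Vars g) (Vars h) → IsAE (g - h)
  | mul {g h : K} : IsAE g → IsAE h → Disjoint (Vars g) (Vars h) → IsAE (g * h)
  | div {g h : K} : IsAE g → IsAE h → Disjoint (Vars g) (Vars h) → IsAE (g / h)

/-- The action `σ·f` of a permutation of the variables on `K`, substituting `σ(xᵢ)` for `xᵢ`. -/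
def permAct (σ : Equiv.Perm ℕ) : K ≃+* K :=
  IsFractionRing.ringEquivOfRingEquiv (renameEquiv ℝ σ).toRingEquiv

/-- `f ≅ g` : `f` and `g` are isomorphic, i.e. differ by a permutation of the variables. -/
def Iso (f g : K) : Prop := ∃ σ : Equiv.Perm ℕ, permAct σ f = g

/-- First type: `-f ∉ 𝒜`. -/
def FirstType (f : K) : Prop := IsAE f ∧ ¬ IsAE (-f)

/-- Second type: `-f ∈ 𝒜` but `f ≇ -f`. -/
def SecondType (f : K) : Prop := IsAE f ∧ IsAE (-f) ∧ ¬ Iso f (-f)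

/-- Third type: `-f ∈ 𝒜` and `f ≅ -f`. -/
def ThirdType (f : K) : Prop := IsAE f ∧ IsAE (-f) ∧ Iso f (-f)

/-- The four binary operators. -/
inductive Op : Type
  | add | sub | mul | div
deriving DecidableEq

/-- `EndsWith f o` : the arithmetic expression `f` ends with the operator `o`. -/
inductive EndsWith : K → Op → Prop
  | var (i : ℕ) : EndsWith (Xv i) Op.mul
  | add_base {i j : ℕ} (hij : i ≠ j) : EndsWith (Xv i + Xv j) Op.add
  | sub_base {i j : ℕ} (hij : i ≠ j) : EndsWith (Xv i - Xv j) Op.sub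
  | mul_base {i j : ℕ} (hij : i ≠ j) : EndsWith (Xv i * Xv j) Op.mul
  | div_base {i j : ℕ} (hij : i ≠ j) : EndsWith (Xv i / Xv j) Op.div
  | add_rec {g h : K} {o₁ o₂ : Op} : IsAE g → IsAE h → Disjoint (Vars g) (Vars h) →
      3 ≤ (Vars (g + h)).ncard → o₁ ≠ Op.sub → o₂ ≠ Op.sub →
      EndsWith g o₁ → EndsWith h o₂ → EndsWith (g + h) Op.add
  | mul_rec {g h : K} {o₁ o₂ : Op} : IsAE g → IsAE h → Disjoint (Vars g) (Vars h) →
      3 ≤ (Vars (g * h)).ncard → o₁ ≠ Op.div → o₂ ≠ Op.div →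
      EndsWith g o₁ → EndsWith h o₂ → EndsWith (g * h) Op.mul
  | div_rec {g h : K} {o₁ o₂ : Op} : IsAE g → IsAE h → Disjoint (Vars g) (Vars h) →
      3 ≤ (Vars (g / h)).ncard → o₁ ≠ Op.div → o₂ ≠ Op.div →
      EndsWith g o₁ → EndsWith h o₂ → EndsWith (g / h) Op.div
  | sub_rec {g h : K} {o₁ o₂ : Op} : IsAE g → IsAE h → Disjoint (Vars g) (Vars h) →
      3 ≤ (Vars (g - h)).ncard → o₁ ≠ Op.sub → o₂ ≠ Op.sub → FirstType h →
      EndsWith g o₁ → EndsWith h o₂ → EndsWith (g - h) Op.sub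

/-- `f` ends with one of the operators in `s`. -/
def EndsIn (f : K) (s : Set Op) : Prop := ∃ o ∈ s, EndsWith f o

/-- The binary operation on `K` corresponding to an operator. -/
def applyOp (o : Op) (a b : K) : K :=
  match o with
  | Op.add => a + b
  | Op.sub => a - b
  | Op.mul => a * b
  | Op.div => a / b

/-- The variable index set `{1, …, n}` (for the variables `x₁, …, xₙ`). -/
def varsUpTo (n : ℕ) : Set ℕ := {i | 1 ≤ i ∧ i ≤ n}

/-- `𝒜ₙ` : arithmetic expressions whose variable set is exactly `{x₁, …, xₙ}`. -/
def AEn (n : ℕ) : Set K := {f | IsAE f ∧ Vars f = varsUpTo n}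

/-- A multilinear polynomial: degree at most `1` in each variable. -/
def Multilinear (p : P) : Prop := ∀ i : ℕ, p.degreeOf i ≤ 1

/-- The key of a (multilinear) monomial: the sorted list of variables occurring in it;
keys are compared in the lexicographic order on lists. -/
def monKey (m : ℕ →₀ ℕ) : List ℕ := m.support.sort (· ≤ ·)

/-- A (multilinear) polynomial is monic if the coefficient of its lexicographically
leading (i.e. first) monomial is positive. -/
def MonicML (p : P) : Prop :=
  ∃ m ∈ p.support, 0 < p.coeff m ∧ ∀ m' ∈ p.support, monKey m ≤ monKey m'

/-- `MLForm f F₁ F₂` : `F₁ / F₂` is the multilinear form of `f`: `F₁, F₂` are coprime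
multilinear polynomials, `F₂` is monic, and `f = F₁ / F₂`. -/
def MLForm (f : K) (F₁ F₂ : P) : Prop :=
  Multilinear F₁ ∧ Multilinear F₂ ∧ IsRelPrime F₁ F₂ ∧ F₂ ≠ 0 ∧ MonicML F₂ ∧
    f = toK F₁ / toK F₂

/-- A monic arithmetic expression: the numerator of its multilinear form is monic as well. -/
def MonicAE (f : K) : Prop := ∃ F₁ F₂ : P, MLForm f F₁ F₂ ∧ MonicML F₁

/-- The isomorphism class of `f`. -/
def classOf (f : K) : Set K := {g | Iso f g}

/-- `S̄` : the set of isomorphism classes of elements of `S`. -/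
def classes (S : Set K) : Set (Set K) := classOf '' S

/-- `|S̄|` : the number of isomorphism classes of elements of `S`. -/
def countClasses (S : Set K) : ℕ := (classes S).ncard

/-- The number of isomorphism classes of elements of `S` depending on exactly `k` variables. -/
def gradeCount (S : Set K) (k : ℕ) : ℕ := countClasses {f ∈ S | (Vars f).ncard = k}

/-- `ω_n` for a graded family having `N k` elements in grade `k` : the sum over all
partitions `(k₁^{m₁},…,k_s^{m_s})` of `n` of `∏ⱼ C(N kⱼ + mⱼ - 1, mⱼ)`. -/
def omega (N : ℕ → ℕ) (n : ℕ) : ℕ :=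
  ∑ p : n.Partition,
    ∏ k ∈ p.parts.toFinset, Nat.choose (N k + p.parts.count k - 1) (p.parts.count k)

/-- `ω_n′` : the same sum restricted to non-trivial partitions, i.e. `ω_n - N n`. -/
def omega' (N : ℕ → ℕ) (n : ℕ) : ℕ := omega N n - N n

/-- `𝒜(s)` : arithmetic expressions ending with one of the operators in `s`. -/
def Aset (s : Set Op) : Set K := {f | IsAE f ∧ EndsIn f s}

/-- `ℱ(s)` : first-type arithmetic expressions ending with one of the operators in `s`. -/
def Fset (s : Set Op) : Set K := {f | FirstType f ∧ EndsIn f s}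

/-- `ℬ(s)` : second-type arithmetic expressions ending with one of the operators in `s`. -/
def Bset (s : Set Op) : Set K := {f | SecondType f ∧ EndsIn f s}

/-- `𝒞(s)` : third-type arithmetic expressions ending with one of the operators in `s`. -/
def Cset (s : Set Op) : Set K := {f | ThirdType f ∧ EndsIn f s}

/-- `ℳℬ(s)` : monic second-type arithmetic expressions ending with an operator in `s`. -/
def MBset (s : Set Op) : Set K := {f | SecondType f ∧ MonicAE f ∧ EndsIn f s}


/-! ### The permutation action -/

lemma permAct_toK (σ : Equiv.Perm ℕ) (p : P) : permAct σ (toK p) = toK (rename σ p) := by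
  unfold permAct toK
  rw [IsFractionRing.ringEquivOfRingEquiv_algebraMap]
  rfl

lemma permAct_X (σ : Equiv.Perm ℕ) (i : ℕ) : permAct σ (Xv i) = Xv (σ i) := by
  simp [Xv, permAct_toK]

lemma toK_inj : Function.Injective toK := IsFractionRing.injective P K

lemma toK_ne {q : P} (h : q ≠ 0) : toK q ≠ 0 := fun h' => h (toK_inj (by simpa using h'))

lemma exists_frac (f : K) : ∃ p q : P, q ≠ 0 ∧ IsRelPrime p q ∧ f = toK p / toK q := by
  obtain ⟨a, b, h, e⟩ := IsFractionRing.exists_reduced_fraction P f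
  refine ⟨a, b, nonZeroDivisors.coe_ne_zero b, h, ?_⟩
  rw [← e, IsFractionRing.mk'_eq_div]; rfl

lemma permAct_mul (σ τ : Equiv.Perm ℕ) (f : K) :
    permAct (σ * τ) f = permAct σ (permAct τ f) := by
  obtain ⟨p, q, -, -, rfl⟩ := exists_frac f
  simp only [map_div₀, permAct_toK, rename_rename]
  rfl

lemma permAct_one (f : K) : permAct 1 f = f := by
  obtain ⟨p, q, -, -, rfl⟩ := exists_frac f
  simp only [map_div₀, permAct_toK]
  simp

lemma permAct_inv_self (σ : Equiv.Perm ℕ) (f : K) : permAct σ⁻¹ (permAct σ f) = f := by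
  rw [← permAct_mul]; simp [permAct_one]

lemma permAct_self_inv (σ : Equiv.Perm ℕ) (f : K) : permAct σ (permAct σ⁻¹ f) = f := by
  rw [← permAct_mul]; simp [permAct_one]

/-! ### The variables of an element of `K` -/

lemma vars_dvd {p q : P} (hq : q ≠ 0) (h : p ∣ q) : p.vars ⊆ q.vars := by
  obtain ⟨r, rfl⟩ := h
  intro i hi
  rw [mem_vars_iff_degreeOf_ne_zero] at *
  rw [degreeOf_mul_eq (left_ne_zero_of_mul hq) (right_ne_zero_of_mul hq)]
  omega

lemma vars_eq_of_dvd {p q : P} (h : p ∣ q) (h' : q ∣ p) : p.vars = q.vars := by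
  by_cases hq : q = 0
  · subst hq; rw [zero_dvd_iff.1 h']
  · have hp : p ≠ 0 := fun e => hq (by subst e; exact zero_dvd_iff.1 h)
    exact (vars_dvd hq h).antisymm (vars_dvd hp h')

lemma Vars_eq {p q : P} (hq : q ≠ 0) (h : IsRelPrime p q) :
    Vars (toK p / toK q) = ↑(p.vars ∪ q.vars) := by
  ext i
  constructor
  · rintro ⟨p', q', hq', h', e, hi⟩
    rw [div_eq_div_iff (toK_ne hq) (toK_ne hq'), ← map_mul, ← map_mul] at e
    have e := toK_inj e
    have h1 : p ∣ p' := h.dvd_of_dvd_mul_right ⟨q', e.symm⟩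
    have h2 : p' ∣ p := h'.dvd_of_dvd_mul_right ⟨q, e⟩
    have h3 : q ∣ q' := h.symm.dvd_of_dvd_mul_left ⟨p', by rw [e, mul_comm]⟩
    have h4 : q' ∣ q := h'.symm.dvd_of_dvd_mul_left ⟨p, by rw [← e, mul_comm]⟩
    rw [vars_eq_of_dvd h1 h2, vars_eq_of_dvd h3 h4]
    simpa using hi
  · intro hi
    exact ⟨p, q, hq, h, rfl, by simpa using hi⟩

lemma Vars_finite (f : K) : (Vars f).Finite := by
  obtain ⟨p, q, hq, h, rfl⟩ := exists_frac f
  rw [Vars_eq hq h]; exact Finset.finite_toSet _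

lemma permAct_congr {σ τ : Equiv.Perm ℕ} {f : K} (h : ∀ i ∈ Vars f, σ i = τ i) :
    permAct σ f = permAct τ f := by
  obtain ⟨p, q, hq, hr, rfl⟩ := exists_frac f
  rw [Vars_eq hq hr] at h
  simp only [map_div₀, permAct_toK]
  have key : ∀ r : P, (∀ i ∈ r.vars, σ i = τ i) → rename σ r = rename τ r := by
    intro r hr
    apply hom_congr_vars (f₁ := (rename σ : P →ₐ[ℝ] P).toRingHom)
      (f₂ := (rename τ : P →ₐ[ℝ] P).toRingHom)
    · ext; simp
    · intro i hi _
      simp [hr i hi]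
    · rfl
  rw [key p (fun i hi => h i (by simp [hi])), key q (fun i hi => h i (by simp [hi]))]

lemma permAct_fix {σ : Equiv.Perm ℕ} {f : K} (h : ∀ i ∈ Vars f, σ i = i) :
    permAct σ f = f := by
  rw [permAct_congr (τ := 1) (by simpa using h), permAct_one]

lemma Vars_perm_sub (σ : Equiv.Perm ℕ) (f : K) : Vars (permAct σ f) ⊆ σ '' Vars f := by
  obtain ⟨p, q, hq, h, rfl⟩ := exists_frac f
  have hi : Function.Injective (rename σ : P → P) := rename_injective _ σ.injective
  have hr : IsRelPrime (rename σ p) (rename σ q) := by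
    have : IsRelPrime ((renameEquiv ℝ σ) p) ((renameEquiv ℝ σ) q) := by
      apply IsRelPrime.of_map (renameEquiv ℝ σ).symm
      simpa using h
    simpa using this
  simp only [map_div₀, permAct_toK]
  rw [Vars_eq hq h, Vars_eq (fun e => hq (hi (by simpa using e))) hr]
  classical
  intro i hi
  simp only [Finset.coe_union, Set.mem_union, Finset.mem_coe] at hi
  rcases hi with hi | hi
  · obtain ⟨j, hj, rfl⟩ := mem_vars_rename _ _ hi
    exact ⟨j, by simp [hj], rfl⟩
  · obtain ⟨j, hj, rfl⟩ := mem_vars_rename _ _ hi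
    exact ⟨j, by simp [hj], rfl⟩

lemma Vars_perm (σ : Equiv.Perm ℕ) (f : K) : Vars (permAct σ f) = σ '' Vars f := by
  refine (Vars_perm_sub σ f).antisymm ?_
  rintro _ ⟨i, hi, rfl⟩
  have := Vars_perm_sub σ⁻¹ (permAct σ f)
  rw [permAct_inv_self] at this
  obtain ⟨j, hj, rfl⟩ := this hi
  simpa using hj

lemma Vars_X (i : ℕ) : Vars (Xv i) = {i} := by
  have : Xv i = toK (X i) / toK 1 := by simp [Xv]
  rw [this, Vars_eq one_ne_zero isRelPrime_one_right]
  simp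

lemma swap_ne {i j : ℕ} {f : K} (hi : i ∈ Vars f) (hj : j ∉ Vars f) :
    permAct (Equiv.swap i j) f ≠ f := by
  intro e
  apply hj
  rw [← e, Vars_perm]
  exact ⟨i, hi, by simp⟩

lemma swap_fix {i j : ℕ} {f : K} (hi : i ∉ Vars f) (hj : j ∉ Vars f) :
    permAct (Equiv.swap i j) f = f := by
  apply permAct_fix
  intro k hk
  apply Equiv.swap_apply_of_ne_of_ne
  · rintro rfl; exact hi hk
  · rintro rfl; exact hj hk

lemma exists_fresh {A : Set ℕ} (hA : A.Finite) : ∃ j, j ∉ A := hA.exists_notMem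

/-- If all permutations fixing `A` fix `f`, the variables of `f` are in `A`. -/
lemma Vars_sub_of {f : K} {A : Set ℕ} (hA : A.Finite)
    (h : ∀ i j, i ∉ A → j ∉ A → permAct (Equiv.swap i j) f = f) : Vars f ⊆ A := by
  intro i hi
  by_contra hc
  obtain ⟨j, hj⟩ := exists_fresh (hA.union (Vars_finite f))
  simp only [Set.mem_union, not_or] at hj
  exact swap_ne hi hj.2 (h i j hc hj.1)

lemma Vars_add_sub (g h : K) : Vars (g + h) ⊆ Vars g ∪ Vars h := by
  apply Vars_sub_of ((Vars_finite g).union (Vars_finite h))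
  intro i j hi hj
  simp only [Set.mem_union, not_or] at hi hj
  rw [map_add, swap_fix hi.1 hj.1, swap_fix hi.2 hj.2]

lemma Vars_mul_sub (g h : K) : Vars (g * h) ⊆ Vars g ∪ Vars h := by
  apply Vars_sub_of ((Vars_finite g).union (Vars_finite h))
  intro i j hi hj
  simp only [Set.mem_union, not_or] at hi hj
  rw [map_mul, swap_fix hi.1 hj.1, swap_fix hi.2 hj.2]

lemma Vars_neg_sub (g : K) : Vars (-g) ⊆ Vars g := by
  apply Vars_sub_of (Vars_finite g)
  intro i j hi hj
  rw [map_neg, swap_fix hi hj]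

lemma Vars_neg (g : K) : Vars (-g) = Vars g := by
  refine (Vars_neg_sub g).antisymm ?_
  have := Vars_neg_sub (-g)
  rwa [neg_neg] at this

lemma Vars_inv_sub (g : K) : Vars (g⁻¹) ⊆ Vars g := by
  apply Vars_sub_of (Vars_finite g)
  intro i j hi hj
  rw [map_inv₀, swap_fix hi hj]

lemma Vars_inv (g : K) : Vars (g⁻¹) = Vars g := by
  refine (Vars_inv_sub g).antisymm ?_
  have := Vars_inv_sub (g⁻¹)
  rwa [inv_inv] at this

lemma Vars_zero : Vars (0 : K) = ∅ := by
  apply Set.subset_empty_iff.1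
  apply Vars_sub_of Set.finite_empty
  intro i j _ _
  rw [map_zero]

lemma ne_zero_of_Vars {f : K} (h : (Vars f).Nonempty) : f ≠ 0 := by
  rintro rfl; rw [Vars_zero] at h; simp at h

lemma Vars_add {g h : K} (hd : Disjoint (Vars g) (Vars h)) :
    Vars (g + h) = Vars g ∪ Vars h := by
  refine (Vars_add_sub g h).antisymm ?_
  have key : ∀ g h : K, Disjoint (Vars g) (Vars h) → Vars g ⊆ Vars (g + h) := by
    intro g h hd i hi
    have : g = (g + h) + (-h) := by ring
    have h2 : i ∈ Vars (g + h) ∪ Vars (-h) := Vars_add_sub _ _ (by rwa [← this])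
    rw [Vars_neg] at h2
    exact h2.resolve_right (fun h3 => Set.disjoint_left.1 hd hi h3)
  apply Set.union_subset (key g h hd)
  rw [add_comm]; exact key h g hd.symm

lemma Vars_sub {g h : K} (hd : Disjoint (Vars g) (Vars h)) :
    Vars (g - h) = Vars g ∪ Vars h := by
  rw [sub_eq_add_neg, Vars_add (by rwa [Vars_neg]), Vars_neg]

lemma Vars_mul {g h : K} (hd : Disjoint (Vars g) (Vars h)) (hg : g ≠ 0) (hh : h ≠ 0) :
    Vars (g * h) = Vars g ∪ Vars h := by
  refine (Vars_mul_sub g h).antisymm ?_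
  have key : ∀ g h : K, Disjoint (Vars g) (Vars h) → h ≠ 0 → Vars g ⊆ Vars (g * h) := by
    intro g h hd hh i hi
    have : g = (g * h) * (h⁻¹) := by field_simp
    have h2 : i ∈ Vars (g * h) ∪ Vars (h⁻¹) := Vars_mul_sub _ _ (by rwa [← this])
    rw [Vars_inv] at h2
    exact h2.resolve_right (fun h3 => Set.disjoint_left.1 hd hi h3)
  apply Set.union_subset (key g h hd hh)
  rw [mul_comm]; exact key h g hd.symm hg

lemma Vars_div {g h : K} (hd : Disjoint (Vars g) (Vars h)) (hg : g ≠ 0) (hh : h ≠ 0) :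
    Vars (g / h) = Vars g ∪ Vars h := by
  rw [div_eq_mul_inv, Vars_mul (by rwa [Vars_inv]) hg (inv_ne_zero hh), Vars_inv]

lemma IsAE.nonempty {f : K} (hf : IsAE f) : (Vars f).Nonempty := by
  induction hf with
  | var i => rw [Vars_X]; simp
  | add _ _ hd h1 h2 => rw [Vars_add hd]; exact h1.inl
  | sub _ _ hd h1 h2 => rw [Vars_sub hd]; exact h1.inl
  | mul _ _ hd h1 h2 =>
    rw [Vars_mul hd (ne_zero_of_Vars h1) (ne_zero_of_Vars h2)]; exact h1.inl
  | div _ _ hd h1 h2 =>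
    rw [Vars_div hd (ne_zero_of_Vars h1) (ne_zero_of_Vars h2)]; exact h1.inl

lemma IsAE.ne_zero {f : K} (hf : IsAE f) : f ≠ 0 := ne_zero_of_Vars hf.nonempty

lemma disjoint_perm (σ : Equiv.Perm ℕ) {g h : K} (hd : Disjoint (Vars g) (Vars h)) :
    Disjoint (Vars (permAct σ g)) (Vars (permAct σ h)) := by
  rw [Vars_perm, Vars_perm]
  exact (Set.disjoint_image_iff σ.injective).2 hd

lemma IsAE.perm (σ : Equiv.Perm ℕ) {f : K} (hf : IsAE f) : IsAE (permAct σ f) := by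
  induction hf with
  | var i => rw [permAct_X]; exact .var _
  | add _ _ hd h1 h2 => rw [map_add]; exact .add h1 h2 (disjoint_perm σ hd)
  | sub _ _ hd h1 h2 => rw [map_sub]; exact .sub h1 h2 (disjoint_perm σ hd)
  | mul _ _ hd h1 h2 => rw [map_mul]; exact .mul h1 h2 (disjoint_perm σ hd)
  | div _ _ hd h1 h2 => rw [map_div₀]; exact .div h1 h2 (disjoint_perm σ hd)

lemma isAE_perm_iff (σ : Equiv.Perm ℕ) {f : K} : IsAE (permAct σ f) ↔ IsAE f :=
  ⟨fun h => by simpa [permAct_inv_self] using h.perm σ⁻¹, fun h => h.perm σ⟩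

lemma ncard_perm (σ : Equiv.Perm ℕ) (f : K) : (Vars (permAct σ f)).ncard = (Vars f).ncard := by
  rw [Vars_perm]; exact Set.ncard_image_of_injective _ σ.injective

/-! ### Isomorphism -/

lemma Iso.refl (f : K) : Iso f f := ⟨1, permAct_one f⟩

lemma Iso.symm {f g : K} : Iso f g → Iso g f := by
  rintro ⟨σ, rfl⟩; exact ⟨σ⁻¹, permAct_inv_self σ f⟩

lemma Iso.trans {f g h : K} : Iso f g → Iso g h → Iso f h := by
  rintro ⟨σ, rfl⟩ ⟨τ, rfl⟩; exact ⟨τ * σ, permAct_mul _ _ _⟩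

lemma Iso.ncard {f g : K} : Iso f g → (Vars f).ncard = (Vars g).ncard := by
  rintro ⟨σ, rfl⟩; exact (ncard_perm σ f).symm

lemma classOf_eq {f g : K} : classOf f = classOf g ↔ Iso f g := by
  constructor
  · intro h
    have : g ∈ classOf g := Iso.refl g
    rw [← h] at this; exact this
  · intro h
    ext k
    exact ⟨fun hk => h.symm.trans hk, fun hk => h.trans hk⟩

lemma exists_perm_extend (A : Finset ℕ) (f : ℕ → ℕ) (hf : Set.InjOn f A) :
    ∃ σ : Equiv.Perm ℕ, ∀ a ∈ A, σ a = f a := by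
  have := Equiv.Perm.isMultiplyPretransitive ℕ A.card
  let x : Fin A.card ↪ ℕ := (A.equivFin.symm.toEmbedding).trans (Function.Embedding.subtype _)
  let y : Fin A.card ↪ ℕ := ⟨fun i => f (x i), by
    intro i j hij
    apply x.injective
    exact hf (A.equivFin.symm i).2 (A.equivFin.symm j).2 hij⟩
  obtain ⟨σ, hσ⟩ := MulAction.exists_smul_eq (Equiv.Perm ℕ) x y
  refine ⟨σ, fun a ha => ?_⟩
  have := congrArg (fun e : Fin A.card ↪ ℕ => e (A.equivFin ⟨a, ha⟩)) hσ
  simpa [x, y] using this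

lemma glue_perm {A B : Set ℕ} (hA : A.Finite) (hB : B.Finite) (hd : Disjoint A B)
    (σ τ : Equiv.Perm ℕ) (hd' : Disjoint (σ '' A) (τ '' B)) :
    ∃ ρ : Equiv.Perm ℕ, (∀ a ∈ A, ρ a = σ a) ∧ ∀ b ∈ B, ρ b = τ b := by
  classical
  obtain ⟨ρ, hρ⟩ := exists_perm_extend (hA.union hB).toFinset (fun i => if i ∈ A then σ i else τ i)
    (by
      intro i hi j hj hij
      simp only [Set.Finite.coe_toFinset, Set.mem_union] at hi hj
      have hx : ∀ i j, i ∈ A → j ∈ B → σ i ≠ τ j := fun i j hi hj e =>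
        Set.disjoint_left.1 hd' ⟨i, hi, rfl⟩ (e ▸ ⟨j, hj, rfl⟩)
      dsimp only at hij
      split_ifs at hij with h1 h2 h2
      · exact σ.injective hij
      · exact absurd hij (hx _ _ h1 (hj.resolve_left h2))
      · exact absurd hij.symm (hx _ _ h2 (hi.resolve_left h1))
      · exact τ.injective hij)
  refine ⟨ρ, fun a ha => ?_, fun b hb => ?_⟩
  · rw [hρ a (by simp [ha])]; simp [ha]
  · rw [hρ b (by simp [hb])]
    rw [if_neg (Set.disjoint_right.1 hd hb)]

lemma glue {g h g' h' : K} (hd : Disjoint (Vars g) (Vars h)) (hd' : Disjoint (Vars g') (Vars h'))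
    (h1 : Iso g g') (h2 : Iso h h') : ∃ σ, permAct σ g = g' ∧ permAct σ h = h' := by
  obtain ⟨σ, rfl⟩ := h1
  obtain ⟨τ, rfl⟩ := h2
  rw [Vars_perm, Vars_perm] at hd'
  obtain ⟨ρ, h1, h2⟩ := glue_perm (Vars_finite g) (Vars_finite h) hd σ τ hd'
  exact ⟨ρ, permAct_congr h1, permAct_congr h2⟩

lemma glue3 {g h k g' h' k' : K} (hd : Disjoint (Vars g) (Vars h))
    (hd2 : Disjoint (Vars g) (Vars k)) (hd3 : Disjoint (Vars h) (Vars k))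
    (hd' : Disjoint (Vars g') (Vars h'))
    (hd2' : Disjoint (Vars g') (Vars k')) (hd3' : Disjoint (Vars h') (Vars k'))
    (h1 : Iso g g') (h2 : Iso h h') (h3 : Iso k k') :
    ∃ σ, permAct σ g = g' ∧ permAct σ h = h' ∧ permAct σ k = k' := by
  obtain ⟨σ, rfl, rfl⟩ := glue hd hd' h1 h2
  obtain ⟨τ, rfl⟩ := h3
  simp only [Vars_perm] at hd2' hd3'
  obtain ⟨ρ, h1, h2⟩ := glue_perm ((Vars_finite g).union (Vars_finite h)) (Vars_finite k)
    (Set.disjoint_union_left.2 ⟨hd2, hd3⟩) σ τ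
    (by rw [Set.image_union]; exact Set.disjoint_union_left.2 ⟨hd2', hd3'⟩)
  exact ⟨ρ, permAct_congr fun a ha => h1 a (Or.inl ha), permAct_congr fun a ha => h1 a (Or.inr ha),
    permAct_congr h2⟩

lemma exists_iso_disjoint (f : K) {A : Set ℕ} (hA : A.Finite) :
    ∃ g, Iso f g ∧ Disjoint (Vars g) A := by
  obtain ⟨N, hN⟩ := hA.bddAbove
  obtain ⟨σ, hσ⟩ := exists_perm_extend (Vars_finite f).toFinset (fun i => i + (N + 1))
    (fun i _ j _ h => by simpa using h)
  refine ⟨_, ⟨σ, rfl⟩, ?_⟩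
  rw [Vars_perm, Set.disjoint_left]
  rintro _ ⟨i, hi, rfl⟩ h
  have := hN h
  rw [hσ i (by simpa using hi)] at this
  omega

lemma exists_iso_upTo (f : K) : ∃ g, Iso f g ∧ Vars g = varsUpTo (Vars f).ncard := by
  have hfin := Vars_finite f
  let A := hfin.toFinset
  have hc : A.card = (Vars f).ncard := (Set.ncard_eq_toFinset_card _ hfin).symm
  have e : A ≃ Finset.Icc 1 (Vars f).ncard := Finset.equivOfCardEq (by simp [hc])
  classical
  obtain ⟨σ, hσ⟩ := exists_perm_extend A (fun i => if h : i ∈ A then (e ⟨i, h⟩ : ℕ) else 0)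
    (by
      intro i hi j hj hij
      simp only [Finset.mem_coe] at hi hj
      simp only [hi, hj, dif_pos] at hij
      have := e.injective (Subtype.ext hij)
      simpa using this)
  refine ⟨_, ⟨σ, rfl⟩, ?_⟩
  rw [Vars_perm]
  ext k
  constructor
  · rintro ⟨i, hi, rfl⟩
    have hi' : i ∈ A := by simpa [A] using hi
    rw [hσ i hi', dif_pos hi']
    have := (e ⟨i, hi'⟩).2
    exact Finset.mem_Icc.1 this
  · intro hk
    have hk' : k ∈ Finset.Icc 1 (Vars f).ncard := by simpa [varsUpTo] using hk
    have h2 := (e.symm ⟨k, hk'⟩).2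
    refine ⟨e.symm ⟨k, hk'⟩, hfin.mem_toFinset.1 h2, ?_⟩
    rw [hσ _ h2, dif_pos h2]
    simp

lemma ncard_upTo (k : ℕ) : (varsUpTo k).ncard = k := by
  have : varsUpTo k = ↑(Finset.Icc 1 k) := by ext; simp [varsUpTo]
  rw [this, Set.ncard_coe_finset]; simp

/-! ### Additive atoms and uniqueness of additive decompositions -/

/-- `f` is a product of two non-constant elements with disjoint variables. -/
def IsProd (f : K) : Prop :=
  ∃ a b : K, (Vars a).Nonempty ∧ (Vars b).Nonempty ∧ Disjoint (Vars a) (Vars b) ∧ f = a * b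

/-- Additively indecomposable elements (up to sign). -/
def Atom (f : K) : Prop := (∃ i, f = Xv i ∨ f = -Xv i) ∨ IsProd f

lemma IsProd.vars {f a b : K} (ha : (Vars a).Nonempty) (hb : (Vars b).Nonempty)
    (hd : Disjoint (Vars a) (Vars b)) (hf : f = a * b) : Vars f = Vars a ∪ Vars b := by
  rw [hf, Vars_mul hd (ne_zero_of_Vars ha) (ne_zero_of_Vars hb)]

lemma Atom.nonempty {f : K} (h : Atom f) : (Vars f).Nonempty := by
  rcases h with ⟨i, rfl | rfl⟩ | ⟨a, b, ha, hb, hd, e⟩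
  · simp [Vars_X]
  · simp [Vars_neg, Vars_X]
  · rw [IsProd.vars ha hb hd e]; exact ha.inl

lemma Atom.neg {f : K} (h : Atom f) : Atom (-f) := by
  rcases h with ⟨i, rfl | rfl⟩ | ⟨a, b, ha, hb, hd, rfl⟩
  · exact Or.inl ⟨i, Or.inr rfl⟩
  · exact Or.inl ⟨i, Or.inl (by simp)⟩
  · exact Or.inr ⟨-a, b, by rwa [Vars_neg], hb, by rwa [Vars_neg], by ring⟩

lemma Atom.perm (σ : Equiv.Perm ℕ) {f : K} (h : Atom f) : Atom (permAct σ f) := by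
  rcases h with ⟨i, rfl | rfl⟩ | ⟨a, b, ha, hb, hd, rfl⟩
  · exact Or.inl ⟨σ i, Or.inl (permAct_X σ i)⟩
  · exact Or.inl ⟨σ i, Or.inr (by rw [map_neg, permAct_X])⟩
  · refine Or.inr ⟨permAct σ a, permAct σ b, ?_, ?_, disjoint_perm σ hd, map_mul _ _ _⟩
    · rw [Vars_perm]; exact ha.image _
    · rw [Vars_perm]; exact hb.image _

lemma swap_swap_fix {x x' y y' : ℕ} {a : K} (hx' : x' ∉ Vars a) (hy : y ∉ Vars a)
    (hy' : y' ∉ Vars a) (h1 : y ≠ x') (h2 : y' ≠ x') :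
    permAct (Equiv.swap y y') (permAct (Equiv.swap x x') a) = permAct (Equiv.swap x x') a := by
  have key : ∀ z, z ∉ Vars a → z ≠ x' → z ∉ Vars (permAct (Equiv.swap x x') a) := by
    intro z hz hzx h
    rw [Vars_perm] at h
    obtain ⟨w, hw, e⟩ := h
    by_cases hwx : w = x
    · subst hwx; simp at e; exact hzx e.symm
    · by_cases hwx' : w = x'
      · subst hwx'
        exact hx' hw
      · rw [Equiv.swap_apply_of_ne_of_ne hwx hwx'] at e
        subst e; exact hz hw
  exact swap_fix (key y hy h1) (key y' hy' h2)

/-- The mixed second difference in the variables `x` and `y`. -/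
def DD (x x' y y' : ℕ) (f : K) : K :=
  f - permAct (Equiv.swap x x') f - permAct (Equiv.swap y y') f +
    permAct (Equiv.swap y y') (permAct (Equiv.swap x x') f)

lemma DD_add (x x' y y' : ℕ) (f g : K) :
    DD x x' y y' (f + g) = DD x x' y y' f + DD x x' y y' g := by
  simp only [DD, map_add]; ring

lemma DD_zero_left {x x' y y' : ℕ} {f : K} (hx : x ∉ Vars f) (hx' : x' ∉ Vars f) :
    DD x x' y y' f = 0 := by
  rw [DD, swap_fix hx hx']; ring

lemma DD_zero_right {x x' y y' : ℕ} {f : K} (hx' : x' ∉ Vars f) (hy : y ∉ Vars f)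
    (hy' : y' ∉ Vars f) (h1 : y ≠ x') (h2 : y' ≠ x') : DD x x' y y' f = 0 := by
  rw [DD, swap_swap_fix hx' hy hy' h1 h2, swap_fix hy hy']; ring

/-- Two fresh variables. -/
lemma exists_fresh_two {A : Set ℕ} (hA : A.Finite) :
    ∃ x' y', x' ∉ A ∧ y' ∉ A ∧ y' ≠ x' := by
  obtain ⟨x', hx'⟩ := exists_fresh hA
  obtain ⟨y', hy'⟩ := exists_fresh (hA.insert x')
  simp only [Set.mem_insert_iff, not_or] at hy'
  exact ⟨x', y', hx', hy'.2, hy'.1⟩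

lemma mul_swaps {x x' y y' : ℕ} {a b : K} (hxb : x ∉ Vars b)
    (hya : y ∉ Vars a) (hx'a : x' ∉ Vars a) (hx'b : x' ∉ Vars b) (hy'a : y' ∉ Vars a)
    (h1 : y ≠ x') (h2 : y' ≠ x') :
    permAct (Equiv.swap x x') (a * b) = permAct (Equiv.swap x x') a * b ∧
    permAct (Equiv.swap y y') (a * b) = a * permAct (Equiv.swap y y') b ∧
    permAct (Equiv.swap y y') (permAct (Equiv.swap x x') (a * b)) =
      permAct (Equiv.swap x x') a * permAct (Equiv.swap y y') b := by
  simp only [map_mul]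
  rw [swap_fix hxb hx'b, swap_fix hya hy'a, swap_swap_fix hx'a hya hy'a h1 h2]
  simp

lemma DD_mul_ne {x x' y y' : ℕ} {a b : K} (hx : x ∈ Vars a) (hy : y ∈ Vars b)
    (hd : Disjoint (Vars a) (Vars b)) (hx'a : x' ∉ Vars a) (hx'b : x' ∉ Vars b)
    (hy'a : y' ∉ Vars a) (hy'b : y' ∉ Vars b) (h2 : y' ≠ x') :
    DD x x' y y' (a * b) ≠ 0 := by
  have h1 : y ≠ x' := by rintro rfl; exact hx'b hy
  obtain ⟨e1, e2, e3⟩ := mul_swaps (Set.disjoint_left.1 hd hx) (Set.disjoint_right.1 hd hy)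
    hx'a hx'b hy'a h1 h2
  rw [DD, e3, e1, e2]
  have : (a - permAct (Equiv.swap x x') a) * (b - permAct (Equiv.swap y y') b) ≠ 0 :=
    mul_ne_zero (sub_ne_zero.2 (swap_ne hx hx'a).symm) (sub_ne_zero.2 (swap_ne hy hy'b).symm)
  intro e
  apply this
  rw [← e]; ring

/-- Two products differing by a nonzero constant have no crossing variables. -/
lemma prod_cross {a b a' b' : K} (hd : Disjoint (Vars a) (Vars b))
    (hd' : Disjoint (Vars a') (Vars b')) (hc : Vars (a * b - a' * b') = ∅)
    {x y : ℕ} (hx : x ∈ Vars a) (hy : y ∈ Vars b) (hx' : x ∈ Vars a') (hy' : y ∈ Vars b') :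
    a * b - a' * b' = 0 := by
  obtain ⟨u, v, hu, hv, huv⟩ := exists_fresh_two (A := Vars a ∪ Vars b ∪ Vars a' ∪ Vars b')
    ((((Vars_finite _).union (Vars_finite _)).union (Vars_finite _)).union (Vars_finite _))
  simp only [Set.mem_union, not_or] at hu hv
  obtain ⟨⟨⟨hua, hub⟩, hua'⟩, hub'⟩ := hu
  obtain ⟨⟨⟨hva, hvb⟩, hva'⟩, hvb'⟩ := hv
  have h1 : y ≠ u := by rintro rfl; exact hub hy
  obtain ⟨e1, e2, e3⟩ := mul_swaps (Set.disjoint_left.1 hd hx) (Set.disjoint_right.1 hd hy)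
    hua hub hva h1 huv
  obtain ⟨f1, f2, f3⟩ := mul_swaps (Set.disjoint_left.1 hd' hx') (Set.disjoint_right.1 hd' hy')
    hua' hub' hva' h1 huv
  set c := a * b - a' * b' with hcdef
  have hfix : ∀ σ, permAct σ c = c := fun σ => permAct_fix (by rw [hc]; simp)
  have g0 : a' * b' = a * b - c := by rw [hcdef]; ring
  have g1 := hfix (Equiv.swap x u)
  have g2 := hfix (Equiv.swap y v)
  have g3 := hfix (Equiv.swap y v)
  nth_rewrite 1 [← hfix (Equiv.swap x u)] at g3
  nth_rewrite 1 [hcdef] at g1 g2 g3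
  rw [map_sub, e1, f1] at g1
  rw [map_sub, e2, f2] at g2
  rw [map_sub, map_sub, e3, f3] at g3
  have h3 : (a - permAct (Equiv.swap x u) a) * (b - permAct (Equiv.swap y v) b) ≠ 0 :=
    mul_ne_zero (sub_ne_zero.2 (swap_ne hx hua).symm) (sub_ne_zero.2 (swap_ne hy hvb).symm)
  have h4 : c * ((a - permAct (Equiv.swap x u) a) * (b - permAct (Equiv.swap y v) b)) = 0 := by
    generalize permAct (Equiv.swap x u) a = A at *
    generalize permAct (Equiv.swap y v) b = B at *
    generalize permAct (Equiv.swap x u) a' = A' at *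
    generalize permAct (Equiv.swap y v) b' = B' at *
    have k : (a' * b') * (A' * B') = (A' * b') * (a' * B') := by ring
    have k1 : A' * b' = A * b - c := by rw [← g1]; ring
    have k2 : a' * B' = a * B - c := by rw [← g2]; ring
    have k3 : A' * B' = A * B - c := by rw [← g3]; ring
    rw [g0, k1, k2, k3] at k
    clear_value c
    linear_combination -k
  exact (mul_eq_zero.1 h4).resolve_right h3

lemma Vars_eq_of_const {s t : K} (hc : Vars (s - t) = ∅) : Vars s = Vars t := by
  have key : ∀ s t : K, Vars (s - t) = ∅ → Vars s ⊆ Vars t := by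
    intro s t hc
    have h := Vars_add_sub (s - t) t
    rw [hc, sub_add_cancel] at h
    simpa using h
  refine (key s t hc).antisymm (key t s ?_)
  rw [← neg_sub, Vars_neg, hc]

lemma prod_rigid {a b a' b' : K} (ha : (Vars a).Nonempty) (hb : (Vars b).Nonempty)
    (hd : Disjoint (Vars a) (Vars b)) (ha' : (Vars a').Nonempty) (hb' : (Vars b').Nonempty)
    (hd' : Disjoint (Vars a') (Vars b')) (hc : Vars (a * b - a' * b') = ∅) :
    a * b - a' * b' = 0 := by
  by_contra hne
  have hV := Vars_eq_of_const hc
  rw [IsProd.vars ha hb hd rfl, IsProd.vars ha' hb' hd' rfl] at hV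
  -- no crossing
  have n1 : ∀ x ∈ Vars a, ∀ y ∈ Vars b, x ∈ Vars a' → y ∉ Vars b' := fun x hx y hy h1 h2 =>
    hne (prod_cross hd hd' hc hx hy h1 h2)
  have n2 : ∀ x ∈ Vars a, ∀ y ∈ Vars b, x ∈ Vars b' → y ∉ Vars a' := fun x hx y hy h1 h2 =>
    hne (by
      rw [mul_comm a'] at hc ⊢
      exact prod_cross hd hd'.symm hc hx hy h1 h2)
  have m1 : ∀ x, x ∈ Vars a ∨ x ∈ Vars b → x ∈ Vars a' ∨ x ∈ Vars b' := fun x hx => by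
    have : x ∈ Vars a ∪ Vars b := hx
    rw [hV] at this; exact this
  have m2 : ∀ x, x ∈ Vars a' ∨ x ∈ Vars b' → x ∈ Vars a ∨ x ∈ Vars b := fun x hx => by
    have : x ∈ Vars a' ∪ Vars b' := hx
    rw [← hV] at this; exact this
  have dj : ∀ x, x ∈ Vars a' → x ∉ Vars b' := fun x h => Set.disjoint_left.1 hd' h
  obtain ⟨x0, hx0⟩ := ha
  obtain ⟨y0, hy0⟩ := hb
  obtain ⟨u, hu⟩ := ha'
  obtain ⟨v, hv⟩ := hb'
  rcases m1 x0 (Or.inl hx0) with q | q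
  · have b1 : ∀ y ∈ Vars b, y ∈ Vars a' := fun y hy =>
      (m1 y (Or.inr hy)).resolve_right (n1 x0 hx0 y hy q)
    have a1 : ∀ x ∈ Vars a, x ∈ Vars a' := fun x hx =>
      (m1 x (Or.inl hx)).resolve_right (fun h => n2 x hx y0 hy0 h (b1 y0 hy0))
    exact dj v ((m2 v (Or.inr hv)).elim (a1 v) (b1 v)) hv
  · have b1 : ∀ y ∈ Vars b, y ∈ Vars b' := fun y hy =>
      (m1 y (Or.inr hy)).resolve_left (n2 x0 hx0 y hy q)
    have a1 : ∀ x ∈ Vars a, x ∈ Vars b' := fun x hx =>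
      (m1 x (Or.inl hx)).resolve_left (fun h => n1 x hx y0 hy0 h (b1 y0 hy0))
    exact dj u hu ((m2 u (Or.inl hu)).elim (a1 u) (b1 u))

lemma X_ne_neg_const (i : ℕ) : Vars (Xv i + Xv i) ≠ ∅ := by
  intro h
  obtain ⟨j, hj⟩ := exists_fresh (Vars_finite (Xv i))
  have h1 : permAct (Equiv.swap i j) (Xv i + Xv i) = Xv i + Xv i :=
    permAct_fix (by rw [h]; simp)
  refine swap_ne (i := i) (by simp [Vars_X]) hj ?_
  rw [map_add, ← two_mul, ← two_mul] at h1
  exact mul_left_cancel₀ two_ne_zero h1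

lemma prod_not_single {f : K} (h : IsProd f) (i : ℕ) : Vars f ≠ {i} := by
  obtain ⟨a, b, ⟨x, hx⟩, ⟨y, hy⟩, hd, e⟩ := h
  intro h
  rw [IsProd.vars ⟨x, hx⟩ ⟨y, hy⟩ hd e] at h
  have h1 : x ∈ ({i} : Set ℕ) := h ▸ Or.inl hx
  have h2 : y ∈ ({i} : Set ℕ) := h ▸ Or.inr hy
  simp only [Set.mem_singleton_iff] at h1 h2
  subst h1; subst h2
  exact Set.disjoint_left.1 hd hx hy

lemma atom_rigid {s t : K} (hs : Atom s) (ht : Atom t) (hc : Vars (s - t) = ∅) : s = t := by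
  have hV := Vars_eq_of_const hc
  rcases hs with ⟨i, hi⟩ | ⟨a, b, ha, hb, hd, rfl⟩
  · have hVs : Vars s = {i} := by
      rcases hi with rfl | rfl <;> simp [Vars_neg, Vars_X]
    rcases ht with ⟨j, hj⟩ | ht
    · have hVt : Vars t = {j} := by
        rcases hj with rfl | rfl <;> simp [Vars_neg, Vars_X]
      rw [hVs, hVt] at hV
      have : i = j := by simpa using hV
      subst this
      rcases hi with rfl | rfl <;> rcases hj with rfl | rfl
      · rfl
      · rw [sub_neg_eq_add] at hc; exact absurd hc (X_ne_neg_const i)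
      · rw [← Vars_neg, neg_sub, sub_neg_eq_add] at hc; exact absurd hc (X_ne_neg_const i)
      · rfl
    · exact absurd (hV.symm.trans hVs) (prod_not_single ht i)
  · rcases ht with ⟨j, hj⟩ | ⟨a', b', ha', hb', hd', rfl⟩
    · have hVt : Vars t = {j} := by
        rcases hj with rfl | rfl <;> simp [Vars_neg, Vars_X]
      exact absurd (hV.trans hVt) (prod_not_single ⟨a, b, ha, hb, hd, rfl⟩ j)
    · exact sub_eq_zero.1 (prod_rigid ha hb hd ha' hb' hd' hc)

/-- Pairwise disjoint variable sets. -/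
def PD (S : Finset K) : Prop := ∀ s ∈ S, ∀ t ∈ S, s ≠ t → Disjoint (Vars s) (Vars t)

lemma PD.mono {S T : Finset K} (h : PD S) (hT : T ⊆ S) : PD T :=
  fun s hs t ht hst => h s (hT hs) t (hT ht) hst

lemma Vars_sum_subset (S : Finset K) {x : ℕ} (hx : x ∈ Vars (∑ s ∈ S, s)) :
    ∃ s ∈ S, x ∈ Vars s := by
  classical
  induction S using Finset.induction_on with
  | empty => rw [Finset.sum_empty, Vars_zero] at hx; exact hx.elim
  | insert a S ha ih =>
    rw [Finset.sum_insert ha] at hx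
    rcases Vars_add_sub _ _ hx with h | h
    · exact ⟨a, by simp, h⟩
    · obtain ⟨s, hs, h⟩ := ih h
      exact ⟨s, by simp [hs], h⟩

lemma notMem_Vars_sum {S : Finset K} {x : ℕ} (h : ∀ s ∈ S, x ∉ Vars s) :
    x ∉ Vars (∑ s ∈ S, s) := fun hx => by
  obtain ⟨s, hs, h'⟩ := Vars_sum_subset S hx
  exact h s hs h'

lemma PD.disjoint_rest {S : Finset K} [DecidableEq K] (h : PD S) {s : K} (hs : s ∈ S) :
    Disjoint (Vars s) (Vars (∑ t ∈ S.erase s, t)) := by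
  rw [Set.disjoint_left]
  intro x hx
  apply notMem_Vars_sum
  intro t ht
  rw [Finset.mem_erase] at ht
  exact Set.disjoint_left.1 (h s hs t ht.2 (Ne.symm ht.1)) hx

lemma PD.vars_mem {S : Finset K} (h : PD S) {s : K} (hs : s ∈ S) {x : ℕ} (hx : x ∈ Vars s) :
    x ∈ Vars (∑ s ∈ S, s) := by
  classical
  rw [← Finset.add_sum_erase S (fun t => t) hs, Vars_add (h.disjoint_rest hs)]
  exact Or.inl hx

lemma decomp_same {S T : Finset K} (hS : PD S) (hT : PD T) (he : ∑ s ∈ S, s = ∑ t ∈ T, t)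
    {a b : K} (hd : Disjoint (Vars a) (Vars b)) (hs : a * b ∈ S)
    {x y : ℕ} (hx : x ∈ Vars a) (hy : y ∈ Vars b) (hab : Vars (a * b) = Vars a ∪ Vars b)
    {t : K} (ht : t ∈ T) (hxt : x ∈ Vars t) : y ∈ Vars t := by
  classical
  by_contra hyt
  set r := ∑ s ∈ S.erase (a * b), s with hr
  set q := ∑ s ∈ T.erase t, s with hq
  have e1 : ∑ s ∈ S, s = a * b + r := (Finset.add_sum_erase S (fun t => t) hs).symm
  have e2 : ∑ s ∈ T, s = t + q := (Finset.add_sum_erase T (fun t => t) ht).symm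
  have d1 := hS.disjoint_rest hs
  have d2 := hT.disjoint_rest ht
  rw [← hr] at d1
  rw [← hq] at d2
  obtain ⟨u, v, hu, hv, huv⟩ := exists_fresh_two
    (A := Vars a ∪ Vars b ∪ Vars r ∪ Vars t ∪ Vars q)
    (((((Vars_finite _).union (Vars_finite _)).union (Vars_finite _)).union
      (Vars_finite _)).union (Vars_finite _))
  simp only [Set.mem_union, not_or] at hu hv
  obtain ⟨⟨⟨⟨hua, hub⟩, hur⟩, hut⟩, huq⟩ := hu
  obtain ⟨⟨⟨⟨hva, hvb⟩, hvr⟩, hvt⟩, hvq⟩ := hv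
  have h1 : y ≠ u := by rintro rfl; exact hub hy
  have key := DD_mul_ne hx hy hd hua hub hva hvb huv
  have hxr : x ∉ Vars r := Set.disjoint_left.1 d1 (by rw [hab]; exact Or.inl hx)
  have hxq : x ∉ Vars q := Set.disjoint_left.1 d2 hxt
  have z := congrArg (DD x u y v) (e1.symm.trans (he.trans e2))
  rw [DD_add, DD_add, DD_zero_left hxr hur, DD_zero_left hxq huq,
    DD_zero_right hut hyt hvt h1 huv] at z
  exact key (by simpa using z)

lemma decomp_sub {S T : Finset K} (hS : PD S) (hT : PD T) (aS : ∀ s ∈ S, Atom s)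
    (he : ∑ s ∈ S, s = ∑ t ∈ T, t) {s : K} (hs : s ∈ S) : ∃ t ∈ T, Vars s ⊆ Vars t := by
  have hmem : ∀ x ∈ Vars s, ∃ t ∈ T, x ∈ Vars t := by
    intro x hx
    have := hS.vars_mem hs hx
    rw [he] at this
    exact Vars_sum_subset T this
  rcases aS s hs with ⟨i, hi⟩ | ⟨a, b, ⟨x0, hx0⟩, ⟨y0, hy0⟩, hd, rfl⟩
  · have hVs : Vars s = {i} := by
      rcases hi with rfl | rfl <;> simp [Vars_neg, Vars_X]
    obtain ⟨t, ht, h⟩ := hmem i (by simp [hVs])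
    exact ⟨t, ht, by simpa [hVs] using h⟩
  · have hab := IsProd.vars ⟨x0, hx0⟩ ⟨y0, hy0⟩ hd rfl
    obtain ⟨t, ht, h⟩ := hmem x0 (by rw [hab]; exact Or.inl hx0)
    have h1 : ∀ y ∈ Vars b, y ∈ Vars t := fun y hy => decomp_same hS hT he hd hs hx0 hy hab ht h
    have h2 : ∀ x ∈ Vars a, x ∈ Vars t := fun x hx =>
      decomp_same hS hT he hd.symm (by rwa [mul_comm]) hy0 hx
        (by rw [mul_comm, hab, Set.union_comm]) ht (h1 y0 hy0)
    refine ⟨t, ht, ?_⟩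
    rw [hab]
    exact Set.union_subset h2 h1

lemma decomp_subset {S T : Finset K} (hS : PD S) (hT : PD T) (aS : ∀ s ∈ S, Atom s)
    (aT : ∀ t ∈ T, Atom t) (he : ∑ s ∈ S, s = ∑ t ∈ T, t) : S ⊆ T := by
  classical
  intro s hs
  obtain ⟨t, ht, h1⟩ := decomp_sub hS hT aS he hs
  obtain ⟨s', hs', h2⟩ := decomp_sub hT hS aT he.symm ht
  have hss : s = s' := by
    by_contra hne
    obtain ⟨x, hx⟩ := (aS s hs).nonempty
    exact Set.disjoint_left.1 (hS s hs s' hs' hne) hx (h2 (h1 hx))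
  subst hss
  have hV : Vars s = Vars t := h1.antisymm h2
  have e1 := Finset.add_sum_erase S (fun t => t) hs
  have e2 := Finset.add_sum_erase T (fun t => t) ht
  have d1 := hS.disjoint_rest hs
  have d2 := hT.disjoint_rest ht
  have e : s - t = (∑ t ∈ T.erase t, t) + -(∑ t ∈ S.erase s, t) := by
    have : s + (∑ t ∈ S.erase s, t) = t + (∑ t ∈ T.erase t, t) := by
      rw [e1, e2, he]
    linear_combination this
  have : s = t := by
    apply atom_rigid (aS s hs) (aT t ht)
    rw [Set.eq_empty_iff_forall_notMem]
    intro x hx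
    have hx1 : x ∈ Vars s := by
      rw [sub_eq_add_neg] at hx
      rcases Vars_add_sub _ _ hx with h | h
      · exact h
      · rw [Vars_neg] at h; exact h2 h
    rw [e] at hx
    rcases Vars_add_sub _ _ hx with h | h
    · exact Set.disjoint_left.1 d2 (hV ▸ hx1) h
    · rw [Vars_neg] at h; exact Set.disjoint_left.1 d1 hx1 h
  rwa [this]

theorem decomp_unique {S T : Finset K} (hS : PD S) (hT : PD T) (aS : ∀ s ∈ S, Atom s)
    (aT : ∀ t ∈ T, Atom t) (he : ∑ s ∈ S, s = ∑ t ∈ T, t) : S = T :=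
  (decomp_subset hS hT aS aT he).antisymm (decomp_subset hT hS aT aS he.symm)

/-! ### Sums of atoms -/

/-- `f` is the sum of a finite set of elements satisfying `Q` with disjoint variables. -/
def SumOf (Q : K → Prop) (f : K) : Prop := ∃ S : Finset K, (∀ s ∈ S, Q s) ∧ PD S ∧ f = ∑ s ∈ S, s

lemma SumOf.mono {Q R : K → Prop} (h : ∀ s, Q s → R s) {f : K} : SumOf Q f → SumOf R f := by
  rintro ⟨S, h1, h2, h3⟩
  exact ⟨S, fun s hs => h s (h1 s hs), h2, h3⟩

lemma SumOf.zero (Q : K → Prop) : SumOf Q 0 := ⟨∅, by simp, fun s hs => by simp at hs, by simp⟩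

lemma SumOf.single {Q : K → Prop} {f : K} (h : Q f) : SumOf Q f := by
  refine ⟨{f}, by simpa using h, ?_, by simp⟩
  intro s hs t ht hst
  simp only [Finset.mem_singleton] at hs ht
  exact absurd (hs.trans ht.symm) hst

lemma SumOf.perm (σ : Equiv.Perm ℕ) {Q : K → Prop} (h : ∀ s, Q s → Q (permAct σ s)) {f : K} :
    SumOf Q f → SumOf Q (permAct σ f) := by
  classical
  rintro ⟨S, h1, h2, rfl⟩
  refine ⟨S.image (permAct σ), ?_, ?_, ?_⟩
  · intro s hs
    obtain ⟨t, ht, rfl⟩ := Finset.mem_image.1 hs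
    exact h t (h1 t ht)
  · intro s hs s' hs' hne
    obtain ⟨t, ht, rfl⟩ := Finset.mem_image.1 hs
    obtain ⟨t', ht', rfl⟩ := Finset.mem_image.1 hs'
    exact disjoint_perm σ (h2 t ht t' ht' (fun e => hne (by rw [e])))
  · rw [Finset.sum_image (fun a _ b _ e => (permAct σ).injective e), map_sum]

lemma PD.neg {S : Finset K} [DecidableEq K] (h : PD S) : PD (S.image (fun s => -s)) := by
  intro s hs s' hs' hne
  obtain ⟨t, ht, rfl⟩ := Finset.mem_image.1 hs
  obtain ⟨t', ht', rfl⟩ := Finset.mem_image.1 hs'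
  rw [Vars_neg, Vars_neg]
  exact h t ht t' ht' (fun e => hne (by rw [e]))

lemma sum_image_neg (S : Finset K) [DecidableEq K] :
    ∑ s ∈ S.image (fun s => -s), s = -∑ s ∈ S, s := by
  rw [Finset.sum_image (fun a _ b _ e => neg_injective e), Finset.sum_neg_distrib]

lemma SumOf.neg {Q R : K → Prop} (h : ∀ s, Q s → R (-s)) {f : K} :
    SumOf Q f → SumOf R (-f) := by
  classical
  rintro ⟨S, h1, h2, rfl⟩
  refine ⟨S.image (fun s => -s), ?_, h2.neg, (sum_image_neg S).symm⟩
  intro s hs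
  obtain ⟨t, ht, rfl⟩ := Finset.mem_image.1 hs
  exact h t (h1 t ht)

lemma PD.union {S T : Finset K} [DecidableEq K] (hS : PD S) (hT : PD T)
    (aS : ∀ s ∈ S, (Vars s).Nonempty)
    (hd : Disjoint (Vars (∑ s ∈ S, s)) (Vars (∑ s ∈ T, s))) : PD (S ∪ T) ∧ Disjoint S T := by
  have key : ∀ s ∈ S, ∀ t ∈ T, Disjoint (Vars s) (Vars t) := by
    intro s hs t ht
    rw [Set.disjoint_left]
    intro x hx hx'
    exact Set.disjoint_left.1 hd (hS.vars_mem hs hx) (hT.vars_mem ht hx')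
  constructor
  · intro s hs t ht hne
    rw [Finset.mem_union] at hs ht
    rcases hs with hs | hs <;> rcases ht with ht | ht
    · exact hS s hs t ht hne
    · exact key s hs t ht
    · exact (key t ht s hs).symm
    · exact hT s hs t ht hne
  · rw [Finset.disjoint_left]
    intro s hs ht
    obtain ⟨x, hx⟩ := aS s hs
    exact Set.disjoint_left.1 (key s hs s ht) hx hx

lemma SumOf.add {Q : K → Prop} (hQ : ∀ s, Q s → (Vars s).Nonempty) {f g : K}
    (hd : Disjoint (Vars f) (Vars g)) : SumOf Q f → SumOf Q g → SumOf Q (f + g) := by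
  classical
  rintro ⟨S, h1, h2, rfl⟩ ⟨T, h3, h4, rfl⟩
  obtain ⟨h5, h6⟩ := h2.union h4 (fun s hs => hQ s (h1 s hs)) hd
  refine ⟨S ∪ T, ?_, h5, (Finset.sum_union h6).symm⟩
  intro s hs
  rcases Finset.mem_union.1 hs with h | h
  exacts [h1 s h, h3 s h]

lemma SumOf.split (R : K → Prop) {Q : K → Prop} {f : K}
    (h : SumOf Q f) : ∃ p c, SumOf (fun s => Q s ∧ ¬ R s) p ∧ SumOf (fun s => Q s ∧ R s) c ∧
      f = p + c ∧ Disjoint (Vars p) (Vars c) := by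
  classical
  obtain ⟨S, h1, h2, rfl⟩ := h
  refine ⟨∑ s ∈ S with ¬ R s, s, ∑ s ∈ S with R s, s, ⟨_, ?_, h2.mono (Finset.filter_subset _ _),
    rfl⟩, ⟨_, ?_, h2.mono (Finset.filter_subset _ _), rfl⟩, ?_, ?_⟩
  · intro s hs
    rw [Finset.mem_filter] at hs
    exact ⟨h1 s hs.1, hs.2⟩
  · intro s hs
    rw [Finset.mem_filter] at hs
    exact ⟨h1 s hs.1, hs.2⟩
  · rw [add_comm, Finset.sum_filter_add_sum_filter_not]
  · rw [Set.disjoint_left]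
    intro x hx hx'
    obtain ⟨s, hs, h⟩ := Vars_sum_subset _ hx
    obtain ⟨s', hs', h'⟩ := Vars_sum_subset _ hx'
    rw [Finset.mem_filter] at hs hs'
    exact Set.disjoint_left.1 (h2 s hs.1 s' hs'.1 (by rintro rfl; exact hs.2 hs'.2)) h h'

/-- Atoms of the first type. -/
def PQ (s : K) : Prop := Atom s ∧ IsAE s ∧ ¬ IsAE (-s)

/-- Atoms of the second or third type. -/
def ZQ (s : K) : Prop := Atom s ∧ IsAE s ∧ IsAE (-s)

lemma PQ.perm (σ : Equiv.Perm ℕ) (s : K) (h : PQ s) : PQ (permAct σ s) := by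
  refine ⟨h.1.perm σ, h.2.1.perm σ, ?_⟩
  rw [← map_neg, isAE_perm_iff]; exact h.2.2

lemma ZQ.perm (σ : Equiv.Perm ℕ) (s : K) (h : ZQ s) : ZQ (permAct σ s) := by
  refine ⟨h.1.perm σ, h.2.1.perm σ, ?_⟩
  rw [← map_neg, isAE_perm_iff]; exact h.2.2

lemma ZQ.neg (s : K) (h : ZQ s) : ZQ (-s) := ⟨h.1.neg, h.2.2, by rw [neg_neg]; exact h.2.1⟩

open Classical in
lemma nf {p c h : K} (hp : SumOf PQ p) (hc : SumOf ZQ c) (hh : SumOf PQ h)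
    (d1 : Disjoint (Vars p) (Vars c)) (d2 : Disjoint (Vars p) (Vars h))
    (d3 : Disjoint (Vars c) (Vars h)) :
    ∃ S : Finset K, PD S ∧ (∀ s ∈ S, Atom s) ∧ ∑ s ∈ S, s = p + c - h ∧
      ∑ s ∈ S with (IsAE s ∧ ¬ IsAE (-s)), s = p ∧
      ∑ s ∈ S with (IsAE s ∧ IsAE (-s)), s = c ∧
      ∑ s ∈ S with ¬ IsAE s, s = -h := by
  obtain ⟨A, hA1, hA2, rfl⟩ := hp
  obtain ⟨B, hB1, hB2, rfl⟩ := hc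
  obtain ⟨C, hC1, hC2, rfl⟩ := hh
  obtain ⟨u1, u2⟩ := hA2.union hB2 (fun s hs => (hA1 s hs).1.nonempty) d1
  have hC3 : ∀ s ∈ C.image (fun s => -s), Atom s ∧ ¬ IsAE s ∧ IsAE (-s) := by
    intro s hs
    obtain ⟨t, ht, rfl⟩ := Finset.mem_image.1 hs
    exact ⟨(hC1 t ht).1.neg, (hC1 t ht).2.2, by rw [neg_neg]; exact (hC1 t ht).2.1⟩
  obtain ⟨u3, u4⟩ := u1.union hC2.neg
    (by
      intro s hs
      rcases Finset.mem_union.1 hs with h | h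
      exacts [(hA1 s h).1.nonempty, (hB1 s h).1.nonempty])
    (by
      rw [sum_image_neg, Vars_neg, Finset.sum_union u2, Vars_add d1]
      exact Set.disjoint_union_left.2 ⟨d2, d3⟩)
  refine ⟨A ∪ B ∪ C.image (fun s => -s), u3, ?_, ?_, ?_, ?_, ?_⟩
  · intro s hs
    rcases Finset.mem_union.1 hs with hs | hs
    · rcases Finset.mem_union.1 hs with h | h
      exacts [(hA1 s h).1, (hB1 s h).1]
    · exact (hC3 s hs).1
  · rw [Finset.sum_union u4, Finset.sum_union u2, sum_image_neg]; ring
  · congr 1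
    ext s
    simp only [Finset.mem_filter, Finset.mem_union]
    constructor
    · rintro ⟨(h | h) | h, h1, h2⟩
      · exact h
      · exact absurd (hB1 s h).2.2 h2
      · exact absurd h1 (hC3 s h).2.1
    · intro h
      exact ⟨Or.inl (Or.inl h), (hA1 s h).2⟩
  · congr 1
    ext s
    simp only [Finset.mem_filter, Finset.mem_union]
    constructor
    · rintro ⟨(h | h) | h, h1, h2⟩
      · exact absurd h2 (hA1 s h).2.2
      · exact h
      · exact absurd h1 (hC3 s h).2.1
    · intro h
      exact ⟨Or.inl (Or.inr h), (hB1 s h).2⟩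
  · rw [← sum_image_neg]
    congr 1
    ext s
    simp only [Finset.mem_filter, Finset.mem_union]
    constructor
    · rintro ⟨(h | h) | h, h1⟩
      · exact absurd (hA1 s h).2.1 h1
      · exact absurd (hB1 s h).2.1 h1
      · exact h
    · intro h
      exact ⟨Or.inr h, (hC3 s h).2.1⟩

theorem unique3 {p c h p' c' h' : K} (hp : SumOf PQ p) (hc : SumOf ZQ c) (hh : SumOf PQ h)
    (d1 : Disjoint (Vars p) (Vars c)) (d2 : Disjoint (Vars p) (Vars h))
    (d3 : Disjoint (Vars c) (Vars h)) (hp' : SumOf PQ p') (hc' : SumOf ZQ c') (hh' : SumOf PQ h')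
    (d1' : Disjoint (Vars p') (Vars c')) (d2' : Disjoint (Vars p') (Vars h'))
    (d3' : Disjoint (Vars c') (Vars h')) (e : p + c - h = p' + c' - h') :
    p = p' ∧ c = c' ∧ h = h' := by
  obtain ⟨S, h1, h2, h3, h4, h5, h6⟩ := nf hp hc hh d1 d2 d3
  obtain ⟨S', h1', h2', h3', h4', h5', h6'⟩ := nf hp' hc' hh' d1' d2' d3'
  have : S = S' := decomp_unique h1 h1' h2 h2' (by rw [h3, h3', e])
  subst this
  exact ⟨h4.symm.trans h4', h5.symm.trans h5', neg_injective (h6.symm.trans h6')⟩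

/-! ### Arithmetic expressions as sums of atoms -/

lemma IsAE.dec {f : K} (hf : IsAE f) :
    ∃ S : Finset K, PD S ∧ (∀ s ∈ S, Atom s) ∧ f = ∑ s ∈ S, s ∧ ∃ s ∈ S, IsAE s := by
  classical
  have one : ∀ f, IsAE f → Atom f →
      ∃ S : Finset K, PD S ∧ (∀ s ∈ S, Atom s) ∧ f = ∑ s ∈ S, s ∧ ∃ s ∈ S, IsAE s := by
    intro f h1 h2
    refine ⟨{f}, ?_, by simpa using h2, by simp, f, by simp, h1⟩
    intro s hs t ht hst
    simp only [Finset.mem_singleton] at hs ht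
    exact absurd (hs.trans ht.symm) hst
  induction hf with
  | var i => exact one _ (.var i) (Or.inl ⟨i, Or.inl rfl⟩)
  | @add g h hg hh hd ih1 ih2 =>
    obtain ⟨S, a1, a2, a3, s, a4, a5⟩ := ih1
    obtain ⟨T, b1, b2, b3, -⟩ := ih2
    obtain ⟨c1, c2⟩ := a1.union b1 (fun s hs => (a2 s hs).nonempty) (by rwa [← a3, ← b3])
    refine ⟨S ∪ T, c1, ?_, by rw [Finset.sum_union c2, a3, b3], s, by simp [a4], a5⟩
    intro s hs
    rcases Finset.mem_union.1 hs with h | h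
    exacts [a2 s h, b2 s h]
  | @sub g h hg hh hd ih1 ih2 =>
    obtain ⟨S, a1, a2, a3, s, a4, a5⟩ := ih1
    obtain ⟨T, b1, b2, b3, -⟩ := ih2
    obtain ⟨c1, c2⟩ := a1.union b1.neg (fun s hs => (a2 s hs).nonempty)
      (by rwa [sum_image_neg, Vars_neg, ← a3, ← b3])
    refine ⟨S ∪ T.image (fun s => -s), c1, ?_, ?_, s, by simp [a4], a5⟩
    · intro s hs
      rcases Finset.mem_union.1 hs with h | h
      · exact a2 s h
      · obtain ⟨t, ht, rfl⟩ := Finset.mem_image.1 h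
        exact (b2 t ht).neg
    · rw [Finset.sum_union c2, sum_image_neg, a3, b3]; ring
  | @mul g h hg hh hd ih1 ih2 =>
    exact one _ (.mul hg hh hd) (Or.inr ⟨g, h, hg.nonempty, hh.nonempty, hd, rfl⟩)
  | @div g h hg hh hd ih1 ih2 =>
    exact one _ (.div hg hh hd) (Or.inr ⟨g, h⁻¹, hg.nonempty, by rw [Vars_inv]; exact hh.nonempty,
      by rwa [Vars_inv], div_eq_mul_inv _ _⟩)

lemma PD.sum_isAE {S : Finset K} (hS : PD S) (hA : ∀ s ∈ S, IsAE s) (hne : S.Nonempty) :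
    IsAE (∑ s ∈ S, s) := by
  classical
  induction hne using Finset.Nonempty.cons_induction with
  | singleton a => simpa using hA a (by simp)
  | cons a S ha hne ih =>
    have hd := hS.disjoint_rest (s := a) (by simp)
    rw [Finset.erase_cons] at hd
    rw [Finset.sum_cons]
    exact .add (hA a (by simp)) (ih (hS.mono (by simp)) (fun s hs => hA s (by simp [hs]))) hd

lemma SumOf.isAE {Q : K → Prop} (hQ : ∀ s, Q s → IsAE s) {f : K} (h : SumOf Q f) (h0 : f ≠ 0) :
    IsAE f := by
  obtain ⟨S, h1, h2, rfl⟩ := h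
  apply h2.sum_isAE (fun s hs => hQ s (h1 s hs))
  rw [Finset.nonempty_iff_ne_empty]
  rintro rfl
  simp at h0

lemma SumOf.firstType {f : K} (h : SumOf PQ f) (h0 : f ≠ 0) : FirstType f := by
  classical
  refine ⟨h.isAE (fun s hs => hs.2.1) h0, fun hn => ?_⟩
  obtain ⟨S, h1, h2, h3, s, h4, h5⟩ := hn.dec
  obtain ⟨T, t1, t2, rfl⟩ := h
  have : S = T.image (fun s => -s) := by
    apply decomp_unique h1 t2.neg h2
    · intro t ht
      obtain ⟨t', ht', rfl⟩ := Finset.mem_image.1 ht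
      exact (t1 t' ht').1.neg
    · rw [sum_image_neg, h3]
  rw [this] at h4
  obtain ⟨t, ht, rfl⟩ := Finset.mem_image.1 h4
  exact (t1 t ht).2.2 h5

lemma FirstType.sumOf {Q : K → Prop} (hQ : ∀ s, Q s → IsAE s) {f : K} (hf : FirstType f)
    (h : SumOf Q f) : SumOf (fun s => Q s ∧ ¬ IsAE (-s)) f := by
  classical
  obtain ⟨S, h1, h2, rfl⟩ := h
  refine ⟨S, fun s hs => ⟨h1 s hs, fun hn => hf.2 ?_⟩, h2, rfl⟩
  have hd := h2.disjoint_rest hs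
  rw [← Finset.add_sum_erase S (fun t => t) hs]
  by_cases he : S.erase s = ∅
  · simpa [he] using hn
  · have hr := (h2.mono (Finset.erase_subset s S)).sum_isAE
      (fun t ht => hQ t (h1 t (Finset.mem_of_mem_erase ht))) (Finset.nonempty_iff_ne_empty.2 he)
    rw [neg_add, ← sub_eq_add_neg]
    exact .sub hn hr (by rwa [Vars_neg])

/-! ### Analysis of `EndsWith` -/

lemma ncard_union {A B : Set ℕ} (hA : A.Finite) (hB : B.Finite) (hd : Disjoint A B) :
    (A ∪ B).ncard = A.ncard + B.ncard := Set.ncard_union_eq hd hA hB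

lemma IsAE.ncard_pos {f : K} (hf : IsAE f) : 0 < (Vars f).ncard :=
  (Set.ncard_pos (Vars_finite f)).2 hf.nonempty

lemma ncard_add {g h : K} (hd : Disjoint (Vars g) (Vars h)) :
    (Vars (g + h)).ncard = (Vars g).ncard + (Vars h).ncard := by
  rw [Vars_add hd, ncard_union (Vars_finite _) (Vars_finite _) hd]

lemma ncard_sub {g h : K} (hd : Disjoint (Vars g) (Vars h)) :
    (Vars (g - h)).ncard = (Vars g).ncard + (Vars h).ncard := by
  rw [Vars_sub hd, ncard_union (Vars_finite _) (Vars_finite _) hd]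

lemma IsAE.eq_var {f : K} (hf : IsAE f) (h1 : (Vars f).ncard = 1) : ∃ i, f = Xv i := by
  cases hf with
  | var i => exact ⟨i, rfl⟩
  | add hg hh hd =>
    have := hg.ncard_pos; have := hh.ncard_pos
    rw [ncard_add hd] at h1; omega
  | sub hg hh hd =>
    have := hg.ncard_pos; have := hh.ncard_pos
    rw [ncard_sub hd] at h1; omega
  | mul hg hh hd =>
    have := hg.ncard_pos; have := hh.ncard_pos
    rw [Vars_mul hd hg.ne_zero hh.ne_zero, ncard_union (Vars_finite _) (Vars_finite _) hd] at h1
    omega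
  | div hg hh hd =>
    have := hg.ncard_pos; have := hh.ncard_pos
    rw [Vars_div hd hg.ne_zero hh.ne_zero, ncard_union (Vars_finite _) (Vars_finite _) hd] at h1
    omega

lemma X_firstType (i : ℕ) : FirstType (Xv i) := by
  refine ⟨.var i, fun h => ?_⟩
  obtain ⟨j, hj⟩ := h.eq_var (by rw [Vars_neg, Vars_X]; simp)
  have h1 : Vars (-Xv i) = Vars (Xv j) := by rw [hj]
  rw [Vars_neg, Vars_X, Vars_X] at h1
  have : i = j := by simpa using h1
  subst this
  apply X_ne_neg_const i
  nth_rewrite 1 [← hj]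
  rw [neg_add_cancel, Vars_zero]

lemma X_disj {i j : ℕ} (h : i ≠ j) : Disjoint (Vars (Xv i)) (Vars (Xv j)) := by
  rw [Vars_X, Vars_X]; simpa using h

lemma X_disj_iff {i j : ℕ} (h : Disjoint (Vars (Xv i)) (Vars (Xv j))) : i ≠ j := by
  rw [Vars_X, Vars_X] at h; simpa using h

lemma EndsWith.isAE {f : K} {o : Op} (h : EndsWith f o) : IsAE f := by
  cases h with
  | var i => exact .var i
  | add_base hij => exact .add (.var _) (.var _) (X_disj hij)
  | sub_base hij => exact .sub (.var _) (.var _) (X_disj hij)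
  | mul_base hij => exact .mul (.var _) (.var _) (X_disj hij)
  | div_base hij => exact .div (.var _) (.var _) (X_disj hij)
  | add_rec a b c => exact .add a b c
  | mul_rec a b c => exact .mul a b c
  | div_rec a b c => exact .div a b c
  | sub_rec a b c => exact .sub a b c

/-- Ending with `×` or `÷`. -/
def EE (s : K) : Prop := EndsWith s Op.mul ∨ EndsWith s Op.div

lemma EE.isAE (s : K) (h : EE s) : IsAE s := h.elim EndsWith.isAE EndsWith.isAE

lemma atom_mul {g h : K} (hg : IsAE g) (hh : IsAE h) (hd : Disjoint (Vars g) (Vars h)) :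
    Atom (g * h) := Or.inr ⟨g, h, hg.nonempty, hh.nonempty, hd, rfl⟩

lemma atom_div {g h : K} (hg : IsAE g) (hh : IsAE h) (hd : Disjoint (Vars g) (Vars h)) :
    Atom (g / h) := Or.inr ⟨g, h⁻¹, hg.nonempty, by rw [Vars_inv]; exact hh.nonempty,
      by rwa [Vars_inv], div_eq_mul_inv _ _⟩

lemma EE.atom (s : K) (h : EE s) : Atom s := by
  rcases h with h | h
  · cases h with
    | var i => exact Or.inl ⟨i, Or.inl rfl⟩
    | mul_base hij => exact atom_mul (.var _) (.var _) (X_disj hij)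
    | mul_rec a b c => exact atom_mul a b c
  · cases h with
    | div_base hij => exact atom_div (.var _) (.var _) (X_disj hij)
    | div_rec a b c => exact atom_div a b c

lemma EE.nonempty (s : K) (h : EE s) : (Vars s).Nonempty := (EE.atom s h).nonempty

lemma EndsWith.perm (σ : Equiv.Perm ℕ) {f : K} {o : Op} (h : EndsWith f o) :
    EndsWith (permAct σ f) o := by
  have hne : ∀ i j, i ≠ j → σ i ≠ σ j := fun i j h e => h (σ.injective e)
  induction h with
  | var i => rw [permAct_X]; exact .var _
  | add_base hij => rw [map_add, permAct_X, permAct_X]; exact .add_base (hne _ _ hij)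
  | sub_base hij => rw [map_sub, permAct_X, permAct_X]; exact .sub_base (hne _ _ hij)
  | mul_base hij => rw [map_mul, permAct_X, permAct_X]; exact .mul_base (hne _ _ hij)
  | div_base hij => rw [map_div₀, permAct_X, permAct_X]; exact .div_base (hne _ _ hij)
  | add_rec a b c d e f _ _ g h =>
    rw [map_add]
    exact .add_rec (a.perm σ) (b.perm σ) (disjoint_perm σ c)
      (by rw [← map_add, ncard_perm]; exact d) e f g h
  | mul_rec a b c d e f _ _ g h =>
    rw [map_mul]
    exact .mul_rec (a.perm σ) (b.perm σ) (disjoint_perm σ c)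
      (by rw [← map_mul, ncard_perm]; exact d) e f g h
  | div_rec a b c d e f _ _ g h =>
    rw [map_div₀]
    exact .div_rec (a.perm σ) (b.perm σ) (disjoint_perm σ c)
      (by rw [← map_div₀, ncard_perm]; exact d) e f g h
  | sub_rec a b c d e f k _ _ g h =>
    rw [map_sub]
    exact .sub_rec (a.perm σ) (b.perm σ) (disjoint_perm σ c)
      (by rw [← map_sub, ncard_perm]; exact d) e f
      ⟨k.1.perm σ, by rw [← map_neg, isAE_perm_iff]; exact k.2⟩ g h

lemma EE.perm (σ : Equiv.Perm ℕ) (s : K) (h : EE s) : EE (permAct σ s) :=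
  h.imp (EndsWith.perm σ) (EndsWith.perm σ)

lemma ew_add {g h : K} {o₁ o₂ : Op} (hd : Disjoint (Vars g) (Vars h)) (h1 : o₁ ≠ Op.sub)
    (h2 : o₂ ≠ Op.sub) (hg : EndsWith g o₁) (hh : EndsWith h o₂) : EndsWith (g + h) Op.add := by
  by_cases h3 : 3 ≤ (Vars (g + h)).ncard
  · exact .add_rec hg.isAE hh.isAE hd h3 h1 h2 hg hh
  · rw [ncard_add hd] at h3
    have a := hg.isAE.ncard_pos
    have b := hh.isAE.ncard_pos
    obtain ⟨i, rfl⟩ := hg.isAE.eq_var (by omega)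
    obtain ⟨j, rfl⟩ := hh.isAE.eq_var (by omega)
    exact .add_base (X_disj_iff hd)

lemma ew_sub {g h : K} {o₁ o₂ : Op} (hd : Disjoint (Vars g) (Vars h)) (h1 : o₁ ≠ Op.sub)
    (h2 : o₂ ≠ Op.sub) (hf : FirstType h) (hg : EndsWith g o₁) (hh : EndsWith h o₂) :
    EndsWith (g - h) Op.sub := by
  by_cases h3 : 3 ≤ (Vars (g - h)).ncard
  · exact .sub_rec hg.isAE hh.isAE hd h3 h1 h2 hf hg hh
  · rw [ncard_sub hd] at h3
    have a := hg.isAE.ncard_pos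
    have b := hh.isAE.ncard_pos
    obtain ⟨i, rfl⟩ := hg.isAE.eq_var (by omega)
    obtain ⟨j, rfl⟩ := hh.isAE.eq_var (by omega)
    exact .sub_base (X_disj_iff hd)

/-- The set of operators other than `−`. -/
def amd : Set Op := {Op.add, Op.mul, Op.div}

lemma mem_amd {o : Op} : o ∈ amd ↔ o ≠ Op.sub := by
  cases o <;> simp [amd]

lemma EndsWith.sumOf {f : K} {o : Op} (h : EndsWith f o) (ho : o ≠ Op.sub) : SumOf EE f := by
  induction h with
  | var i => exact .single (Or.inl (.var i))
  | @add_base i j hij =>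
    exact .add EE.nonempty (X_disj hij) (.single (Or.inl (.var i))) (.single (Or.inl (.var j)))
  | sub_base hij => exact absurd rfl ho
  | mul_base hij => exact .single (Or.inl (.mul_base hij))
  | div_base hij => exact .single (Or.inr (.div_base hij))
  | add_rec a b c d e f _ _ g h => exact .add EE.nonempty c (g e) (h f)
  | mul_rec a b c d e f k l g h => exact .single (Or.inl (.mul_rec a b c d e f k l))
  | div_rec a b c d e f k l g h => exact .single (Or.inr (.div_rec a b c d e f k l))
  | sub_rec a b c d e f k _ _ g h => exact absurd rfl ho

lemma sumOf_ends {S : Finset K} (hS : PD S) (hA : ∀ s ∈ S, EE s) (hne : S.Nonempty) :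
    ∃ o, o ≠ Op.sub ∧ EndsWith (∑ s ∈ S, s) o := by
  classical
  have one : ∀ s, EE s → ∃ o, o ≠ Op.sub ∧ EndsWith s o := by
    rintro s (h | h)
    · exact ⟨_, by simp, h⟩
    · exact ⟨_, by simp, h⟩
  induction hne using Finset.Nonempty.cons_induction with
  | singleton a =>
    rw [Finset.sum_singleton]
    exact one a (hA a (by simp))
  | cons a S ha hne ih =>
    have hd := hS.disjoint_rest (s := a) (by simp)
    rw [Finset.erase_cons] at hd
    rw [Finset.sum_cons]
    obtain ⟨o, h1, h2⟩ := ih (hS.mono (by simp)) (fun s hs => hA s (by simp [hs]))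
    obtain ⟨o', h1', h2'⟩ := one a (hA a (by simp))
    exact ⟨Op.add, by simp, ew_add hd h1' h1 h2' h2⟩

lemma endsIn_amd {f : K} : EndsIn f amd ↔ SumOf EE f ∧ f ≠ 0 := by
  constructor
  · rintro ⟨o, ho, h⟩
    exact ⟨h.sumOf (mem_amd.1 ho), h.isAE.ne_zero⟩
  · rintro ⟨⟨S, h1, h2, rfl⟩, h0⟩
    obtain ⟨o, ho, h⟩ := sumOf_ends h2 h1 (by
      rw [Finset.nonempty_iff_ne_empty]; rintro rfl; simp at h0)
    exact ⟨o, mem_amd.2 ho, h⟩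

lemma endsWith_sub {f : K} : EndsWith f Op.sub ↔ ∃ g h, EndsIn g amd ∧ EndsIn h amd ∧
    FirstType h ∧ Disjoint (Vars g) (Vars h) ∧ f = g - h := by
  constructor
  · intro h
    cases h with
    | @sub_base i j hij =>
      exact ⟨Xv i, Xv j, ⟨Op.mul, mem_amd.2 (by simp), .var i⟩, ⟨Op.mul, mem_amd.2 (by simp), .var j⟩,
        X_firstType j, X_disj hij, rfl⟩
    | @sub_rec g h o₁ o₂ a b c d e f k l m =>
      exact ⟨g, h, ⟨o₁, mem_amd.2 e, l⟩, ⟨o₂, mem_amd.2 f, m⟩, k, c, rfl⟩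
  · rintro ⟨g, h, ⟨o, ho, hg⟩, ⟨o', ho', hh⟩, hf, hd, rfl⟩
    exact ew_sub hd (mem_amd.1 ho) (mem_amd.1 ho') hf hg hh

/-! ### Membership in the various sets -/

lemma Aset_amd {g : K} (h : g ∈ Aset amd) : SumOf EE g ∧ g ≠ 0 := endsIn_amd.1 h.2

lemma mem_Aset_amd {g : K} (h : SumOf EE g) (h0 : g ≠ 0) : g ∈ Aset amd :=
  ⟨h.isAE EE.isAE h0, endsIn_amd.2 ⟨h, h0⟩⟩

/-- Elements ending with `×` or `÷` of the first type. -/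
def PE (s : K) : Prop := EE s ∧ ¬ IsAE (-s)

/-- Elements ending with `×` or `÷` not of the first type. -/
def ZE (s : K) : Prop := EE s ∧ IsAE (-s)

lemma PE.pq (s : K) (h : PE s) : PQ s := ⟨EE.atom s h.1, EE.isAE s h.1, h.2⟩

lemma ZE.zq (s : K) (h : ZE s) : ZQ s := ⟨EE.atom s h.1, EE.isAE s h.1, h.2⟩

lemma Fset_amd {h : K} (hh : h ∈ Fset amd) : SumOf PE h ∧ h ≠ 0 := by
  have := endsIn_amd.1 hh.2
  exact ⟨hh.1.sumOf EE.isAE this.1, this.2⟩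

lemma mem_Fset_amd {h : K} (hh : SumOf PE h) (h0 : h ≠ 0) : h ∈ Fset amd :=
  ⟨(hh.mono PE.pq).firstType h0, endsIn_amd.2 ⟨hh.mono fun _ h => h.1, h0⟩⟩

lemma EE_split {g : K} (h : SumOf EE g) : ∃ p c, SumOf PE p ∧ SumOf ZE c ∧ g = p + c ∧
    Disjoint (Vars p) (Vars c) := h.split (fun s => IsAE (-s))

lemma disj_zero_left (A : Set ℕ) : Disjoint (Vars (0 : K)) A := by rw [Vars_zero]; simp

lemma disj_zero_right (A : Set ℕ) : Disjoint A (Vars (0 : K)) := by rw [Vars_zero]; simp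

lemma Cset_amd {c : K} (hc : c ∈ Cset amd) : SumOf ZE c := by
  obtain ⟨⟨-, -, σ, hσ⟩, he⟩ := hc
  obtain ⟨p, z, hp, hz, rfl, hd⟩ := EE_split (endsIn_amd.1 he).1
  have hp' := hp.mono PE.pq
  have hz' := hz.mono ZE.zq
  rw [map_add] at hσ
  have := unique3 (hp'.perm σ (PQ.perm σ)) (hz'.perm σ (ZQ.perm σ)) (SumOf.zero PQ)
    (disjoint_perm σ hd) (disj_zero_right _) (disj_zero_right _)
    (SumOf.zero PQ) (hz'.neg ZQ.neg) hp' (disj_zero_left _) (disj_zero_left _)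
    (by rw [Vars_neg]; exact hd.symm) (by rw [sub_zero, hσ]; ring)
  rw [← this.2.2, zero_add]
  exact hz

lemma unique2 {g h g' h' : K} (hg : SumOf EE g) (hh : SumOf PE h)
    (hd : Disjoint (Vars g) (Vars h)) (hg' : SumOf EE g') (hh' : SumOf PE h')
    (hd' : Disjoint (Vars g') (Vars h')) (e : g - h = g' - h') : g = g' ∧ h = h' := by
  obtain ⟨p, c, hp, hc, rfl, d⟩ := EE_split hg
  obtain ⟨p', c', hp', hc', rfl, d'⟩ := EE_split hg'
  rw [Vars_add d, Set.disjoint_union_left] at hd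
  rw [Vars_add d', Set.disjoint_union_left] at hd'
  obtain ⟨rfl, rfl, rfl⟩ := unique3 (hp.mono PE.pq) (hc.mono ZE.zq) (hh.mono PE.pq) d hd.1 hd.2
    (hp'.mono PE.pq) (hc'.mono ZE.zq) (hh'.mono PE.pq) d' hd'.1 hd'.2 e
  exact ⟨rfl, rfl⟩

/-! ### Invariance under permutations -/

/-- Invariance under the permutation action. -/
def PermInv (S : Set K) : Prop := ∀ (σ : Equiv.Perm ℕ) (f : K), f ∈ S → permAct σ f ∈ S

lemma EndsIn.perm (σ : Equiv.Perm ℕ) {f : K} {s : Set Op} (h : EndsIn f s) :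
    EndsIn (permAct σ f) s := by
  obtain ⟨o, ho, h⟩ := h
  exact ⟨o, ho, h.perm σ⟩

lemma isAE_neg_perm (σ : Equiv.Perm ℕ) {f : K} : IsAE (-permAct σ f) ↔ IsAE (-f) := by
  rw [← map_neg, isAE_perm_iff]

lemma iso_neg_perm (σ : Equiv.Perm ℕ) {f : K} :
    Iso (permAct σ f) (-permAct σ f) ↔ Iso f (-f) := by
  have h1 : Iso f (permAct σ f) := ⟨σ, rfl⟩
  have h2 : Iso (-f) (-permAct σ f) := ⟨σ, map_neg _ _⟩
  exact ⟨fun h => h1.trans (h.trans h2.symm), fun h => h1.symm.trans (h.trans h2)⟩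

lemma inv_A (s : Set Op) : PermInv (Aset s) := fun σ _ hf => ⟨hf.1.perm σ, hf.2.perm σ⟩

lemma inv_F (s : Set Op) : PermInv (Fset s) := fun σ _ hf =>
  ⟨⟨hf.1.1.perm σ, fun h => hf.1.2 ((isAE_neg_perm σ).1 h)⟩, hf.2.perm σ⟩

lemma inv_B (s : Set Op) : PermInv (Bset s) := fun σ _ hf =>
  ⟨⟨hf.1.1.perm σ, (isAE_neg_perm σ).2 hf.1.2.1, fun h => hf.1.2.2 ((iso_neg_perm σ).1 h)⟩,
    hf.2.perm σ⟩

lemma inv_C (s : Set Op) : PermInv (Cset s) := fun σ _ hf =>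
  ⟨⟨hf.1.1.perm σ, (isAE_neg_perm σ).2 hf.1.2.1, (iso_neg_perm σ).2 hf.1.2.2⟩, hf.2.perm σ⟩

lemma PermInv.iso {S : Set K} (h : PermInv S) {f g : K} (hf : f ∈ S) : Iso f g → g ∈ S := by
  rintro ⟨σ, rfl⟩; exact h σ f hf

/-! ### Classes of a given grade -/

/-- The isomorphism classes of elements of `S` with `k` variables. -/
def Cl (S : Set K) (k : ℕ) : Set (Set K) := classOf '' {f | f ∈ S ∧ (Vars f).ncard = k}

lemma classes_eq {S : Set K} (hS : PermInv S) (hA : ∀ f ∈ S, IsAE f) (k : ℕ) :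
    classes (S ∩ AEn k) = Cl S k := by
  ext α
  constructor
  · rintro ⟨f, ⟨h1, h2⟩, rfl⟩
    exact ⟨f, ⟨h1, by rw [h2.2, ncard_upTo]⟩, rfl⟩
  · rintro ⟨f, ⟨h1, rfl⟩, rfl⟩
    obtain ⟨g, h2, h3⟩ := exists_iso_upTo f
    have hg := hS.iso h1 h2
    exact ⟨g, ⟨hg, hA g hg, h3⟩, classOf_eq.2 h2.symm⟩

lemma count_eq {S : Set K} (hS : PermInv S) (hA : ∀ f ∈ S, IsAE f) (k : ℕ) :
    countClasses (S ∩ AEn k) = (Cl S k).ncard := by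
  rw [countClasses, classes_eq hS hA]

lemma mem_Cl {S : Set K} (hS : PermInv S) {k : ℕ} {f : K} :
    classOf f ∈ Cl S k ↔ f ∈ S ∧ (Vars f).ncard = k := by
  constructor
  · rintro ⟨g, ⟨h1, h2⟩, h3⟩
    have h4 := classOf_eq.1 h3
    exact ⟨hS.iso h1 h4, by rw [← h4.ncard, h2]⟩
  · intro h
    exact ⟨f, h, rfl⟩

/-! ### Finiteness -/

lemma finite_AE (n : ℕ) : ∀ T : Finset ℕ, T.card ≤ n → {f | IsAE f ∧ Vars f ⊆ T}.Finite := by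
  classical
  induction n with
  | zero =>
    intro T hT
    have : T = ∅ := by simpa using hT
    subst this
    convert Set.finite_empty
    ext f
    simp only [Set.mem_ofPred_eq, Set.mem_empty_iff_false, iff_false, not_and]
    intro h1 h2
    obtain ⟨x, hx⟩ := h1.nonempty
    simpa using h2 hx
  | succ n ih =>
    intro T hT
    let V : Finset ℕ → Set K := fun U => {f | IsAE f ∧ Vars f ⊆ U}
    have hV : ∀ U ∈ T.ssubsets, (V U).Finite := by
      intro U hU
      apply ih
      have := Finset.card_lt_card (Finset.mem_ssubsets.1 hU)
      omega
    let R : Finset ℕ → Finset ℕ → Set K := fun U W =>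
      Set.image2 (· + ·) (V U) (V W) ∪ Set.image2 (· - ·) (V U) (V W) ∪
      Set.image2 (· * ·) (V U) (V W) ∪ Set.image2 (· / ·) (V U) (V W)
    have hfin : ((Xv '' (T : Set ℕ)) ∪ ⋃ U ∈ T.ssubsets, ⋃ W ∈ T.ssubsets, R U W).Finite := by
      apply Set.Finite.union (T.finite_toSet.image _)
      apply Set.Finite.biUnion (Finset.finite_toSet _)
      intro U hU
      apply Set.Finite.biUnion (Finset.finite_toSet _)
      intro W hW
      have a := hV U hU
      have b := hV W hW
      exact (((Set.Finite.image2 _ a b).union (Set.Finite.image2 _ a b)).union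
        (Set.Finite.image2 _ a b)).union (Set.Finite.image2 _ a b)
    refine hfin.subset ?_
    rintro f ⟨hf, hfT⟩
    have key : ∀ g h : K, IsAE g → IsAE h → Disjoint (Vars g) (Vars h) → Vars g ∪ Vars h ⊆ T →
        f ∈ R (Vars_finite g).toFinset (Vars_finite h).toFinset →
        f ∈ ((Xv '' (T : Set ℕ)) ∪ ⋃ U ∈ T.ssubsets, ⋃ W ∈ T.ssubsets, R U W) := by
      intro g h hg hh hd hT' hR
      have ss : ∀ g h : K, IsAE h → Disjoint (Vars g) (Vars h) → Vars g ∪ Vars h ⊆ T →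
          (Vars_finite g).toFinset ∈ T.ssubsets := by
        intro g h hh hd hT'
        rw [Finset.mem_ssubsets, Finset.ssubset_iff_of_subset]
        · obtain ⟨x, hx⟩ := hh.nonempty
          refine ⟨x, by exact_mod_cast hT' (Or.inr hx), ?_⟩
          simpa using Set.disjoint_right.1 hd hx
        · intro x hx
          rw [Set.Finite.mem_toFinset] at hx
          exact_mod_cast hT' (Or.inl hx)
      refine Or.inr ?_
      refine Set.mem_biUnion (ss g h hh hd hT') ?_
      exact Set.mem_biUnion (ss h g hg hd.symm (by rwa [Set.union_comm])) hR
    have self : ∀ g, IsAE g → g ∈ V (Vars_finite g).toFinset := fun g hg => ⟨hg, by simp⟩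
    cases hf with
    | var i => exact Or.inl ⟨i, by simpa [Vars_X] using hfT, rfl⟩
    | @add g h hg hh hd =>
      refine key g h hg hh hd (by rwa [Vars_add hd] at hfT) ?_
      exact Or.inl (Or.inl (Or.inl ⟨g, self g hg, h, self h hh, rfl⟩))
    | @sub g h hg hh hd =>
      refine key g h hg hh hd (by rwa [Vars_sub hd] at hfT) ?_
      exact Or.inl (Or.inl (Or.inr ⟨g, self g hg, h, self h hh, rfl⟩))
    | @mul g h hg hh hd =>
      refine key g h hg hh hd (by rwa [Vars_mul hd hg.ne_zero hh.ne_zero] at hfT) ?_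
      exact Or.inl (Or.inr ⟨g, self g hg, h, self h hh, rfl⟩)
    | @div g h hg hh hd =>
      refine key g h hg hh hd (by rwa [Vars_div hd hg.ne_zero hh.ne_zero] at hfT) ?_
      exact Or.inr ⟨g, self g hg, h, self h hh, rfl⟩

lemma finite_Cl {S : Set K} (hS : PermInv S) (hA : ∀ f ∈ S, IsAE f) (k : ℕ) : (Cl S k).Finite := by
  rw [← classes_eq hS hA]
  apply Set.Finite.image
  refine (finite_AE k (Finset.Icc 1 k) (by simp)).subset ?_
  rintro f ⟨-, h1, h2⟩
  refine ⟨h1, ?_⟩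
  rw [h2]
  intro i hi
  simpa [varsUpTo] using hi

/-! ### Counting -/

lemma ncard_image_congr {α β γ : Type*} {X : Set α} {a : α → β} {b : α → γ}
    (h : ∀ x ∈ X, ∀ y ∈ X, a x = a y ↔ b x = b y) : (a '' X).ncard = (b '' X).ncard := by
  refine Set.ncard_congr (fun y hy => b (Classical.choose hy)) ?_ ?_ ?_
  · intro y hy
    exact ⟨_, (Classical.choose_spec hy).1, rfl⟩
  · intro y z hy hz e
    rw [← (Classical.choose_spec hy).2, ← (Classical.choose_spec hz).2]
    exact (h _ (Classical.choose_spec hy).1 _ (Classical.choose_spec hz).1).2 e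
  · rintro _ ⟨x, hx, rfl⟩
    refine ⟨a x, ⟨x, hx, rfl⟩, ?_⟩
    have hy : a x ∈ a '' X := ⟨x, hx, rfl⟩
    exact (h _ (Classical.choose_spec hy).1 _ hx).1 (Classical.choose_spec hy).2

lemma ncard_W {S T : Set K} (m₁ m₂ : ℕ → ℕ) (hS : ∀ k, (Cl S k).Finite)
    (hT : ∀ k, (Cl T k).Finite) (iT : PermInv T) (I : Finset ℕ) (hinj : Set.InjOn m₂ I) :
    {q : Set K × Set K | ∃ k ∈ I, q.1 ∈ Cl S (m₁ k) ∧ q.2 ∈ Cl T (m₂ k)}.ncard =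
      ∑ k ∈ I, (Cl S (m₁ k)).ncard * (Cl T (m₂ k)).ncard := by
  classical
  induction I using Finset.induction_on with
  | empty => simp
  | insert a I ha ih =>
    have e : {q : Set K × Set K | ∃ k ∈ insert a I, q.1 ∈ Cl S (m₁ k) ∧ q.2 ∈ Cl T (m₂ k)} =
        (Cl S (m₁ a) ×ˢ Cl T (m₂ a)) ∪
        {q : Set K × Set K | ∃ k ∈ I, q.1 ∈ Cl S (m₁ k) ∧ q.2 ∈ Cl T (m₂ k)} := by
      ext q
      simp [Finset.mem_insert, or_and_right, exists_or]
    have f : {q : Set K × Set K | ∃ k ∈ I, q.1 ∈ Cl S (m₁ k) ∧ q.2 ∈ Cl T (m₂ k)}.Finite := by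
      have : (⋃ k ∈ I, Cl S (m₁ k) ×ˢ Cl T (m₂ k)).Finite :=
        Set.Finite.biUnion I.finite_toSet fun k _ => (hS _).prod (hT _)
      refine this.subset ?_
      rintro q ⟨k, hk, h⟩
      exact Set.mem_biUnion hk h
    rw [e, Set.ncard_union_eq ?_ ((hS _).prod (hT _)) f, Finset.sum_insert ha,
      ih (hinj.mono (by simp)), Set.ncard_prod]
    rw [Set.disjoint_left]
    rintro ⟨α, β⟩ ⟨-, h1⟩ ⟨k, hk, -, h2⟩
    dsimp only at h1 h2
    obtain ⟨f, -, rfl⟩ := id h1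
    have h3 := ((mem_Cl iT).1 h1).2
    have h4 := ((mem_Cl iT).1 h2).2
    have : a = k := hinj (by simp) (by simp [hk]) (h3.symm.trans h4)
    subst this
    exact ha hk

/-! ### The first assertion -/

lemma mem_sub {f : K} : EndsIn f {Op.sub} ↔ EndsWith f Op.sub := by
  simp [EndsIn]

lemma sub_form {f : K} : EndsIn f {Op.sub} ↔ ∃ g h, g ∈ Aset amd ∧ h ∈ Fset amd ∧
    Disjoint (Vars g) (Vars h) ∧ f = g - h := by
  rw [mem_sub, endsWith_sub]
  constructor
  · rintro ⟨g, h, h1, h2, h3, h4, h5⟩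
    obtain ⟨o, -, h6⟩ := id h1
    exact ⟨g, h, ⟨h6.isAE, h1⟩, ⟨h3, h2⟩, h4, h5⟩
  · rintro ⟨g, h, h1, h2, h4, h5⟩
    exact ⟨g, h, h1.2, h2.2, h2.1, h4, h5⟩

lemma neg_isAE_sub {f : K} (h : EndsIn f {Op.sub}) : IsAE f ∧ IsAE (-f) := by
  obtain ⟨g, h, h1, h2, h3, rfl⟩ := sub_form.1 h
  exact ⟨h1.1.sub h2.1.1 h3, by rw [neg_sub]; exact h2.1.1.sub h1.1 h3.symm⟩

lemma count_F (n : ℕ) : countClasses (Fset {Op.sub} ∩ AEn n) = 0 := by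
  have : Fset {Op.sub} ∩ AEn n = ∅ := by
    ext f
    simp only [Set.mem_inter_iff, Set.mem_empty_iff_false, iff_false, not_and]
    intro h
    exact absurd (neg_isAE_sub h.2).2 h.1.2
  rw [this]
  simp [countClasses, classes]

lemma AE_A (s : Set Op) : ∀ f ∈ Aset s, IsAE f := fun _ h => h.1
lemma AE_F (s : Set Op) : ∀ f ∈ Fset s, IsAE f := fun _ h => h.1.1
lemma AE_B (s : Set Op) : ∀ f ∈ Bset s, IsAE f := fun _ h => h.1.1
lemma AE_C (s : Set Op) : ∀ f ∈ Cset s, IsAE f := fun _ h => h.1.1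

/-! ### All expressions ending with a subtraction -/

/-- Pairs `(g, h)` describing the differences `g - h`. -/
def XA (n : ℕ) : Set (K × K) := {x | x.1 ∈ Aset amd ∧ x.2 ∈ Fset amd ∧
  Disjoint (Vars x.1) (Vars x.2) ∧ (Vars x.1).ncard + (Vars x.2).ncard = n}

lemma XA_a (n : ℕ) : (fun x : K × K => classOf (x.1 - x.2)) '' XA n = Cl (Aset {Op.sub}) n := by
  ext α
  constructor
  · rintro ⟨⟨g, h⟩, ⟨h1, h2, h3, h4⟩, rfl⟩
    have he := sub_form.2 ⟨g, h, h1, h2, h3, rfl⟩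
    exact ⟨g - h, ⟨⟨(neg_isAE_sub he).1, he⟩, by rw [ncard_sub h3]; exact h4⟩, rfl⟩
  · rintro ⟨f, ⟨h1, h2⟩, rfl⟩
    obtain ⟨g, h, h3, h4, h5, rfl⟩ := sub_form.1 h1.2
    exact ⟨(g, h), ⟨h3, h4, h5, by rw [← ncard_sub h5]; exact h2⟩, rfl⟩

lemma XA_b (n : ℕ) : (fun x : K × K => (classOf x.1, classOf x.2)) '' XA n =
    {q : Set K × Set K | ∃ k ∈ Finset.Icc 1 (n - 1),
      q.1 ∈ Cl (Aset amd) k ∧ q.2 ∈ Cl (Fset amd) (n - k)} := by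
  ext q
  constructor
  · rintro ⟨⟨g, h⟩, ⟨h1, h2, h3, h4⟩, rfl⟩
    dsimp only at h1 h2 h3 h4
    have p1 := h1.1.ncard_pos
    have p2 := h2.1.1.ncard_pos
    refine ⟨(Vars g).ncard, by rw [Finset.mem_Icc]; omega, ⟨g, ⟨h1, rfl⟩, rfl⟩, h, ⟨h2, by omega⟩, rfl⟩
  · obtain ⟨α, β⟩ := q
    rintro ⟨k, hk, ⟨g, ⟨h1, h2⟩, rfl⟩, ⟨h, ⟨h3, h4⟩, e⟩⟩
    dsimp only at e
    subst e
    rw [Finset.mem_Icc] at hk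
    obtain ⟨h', i, d⟩ := exists_iso_disjoint h (Vars_finite g)
    refine ⟨(g, h'), ⟨h1, (inv_F amd).iso h3 i, d.symm, ?_⟩, ?_⟩
    · dsimp only
      rw [← i.ncard]
      omega
    · dsimp only
      rw [classOf_eq.2 i]

lemma XA_eq (n : ℕ) : ∀ x ∈ XA n, ∀ y ∈ XA n,
    (classOf (x.1 - x.2) = classOf (y.1 - y.2) ↔
      ((classOf x.1, classOf x.2) : Set K × Set K) = (classOf y.1, classOf y.2)) := by
  rintro ⟨g, h⟩ ⟨h1, h2, h3, -⟩ ⟨g', h'⟩ ⟨h1', h2', h3', -⟩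
  dsimp only at *
  rw [Prod.mk.injEq, classOf_eq, classOf_eq, classOf_eq]
  constructor
  · rintro ⟨σ, hσ⟩
    rw [map_sub] at hσ
    obtain ⟨e1, e2⟩ := unique2 (Aset_amd (inv_A amd σ g h1)).1 (Fset_amd (inv_F amd σ h h2)).1
      (disjoint_perm σ h3) (Aset_amd h1').1 (Fset_amd h2').1 h3' hσ
    exact ⟨⟨σ, e1⟩, ⟨σ, e2⟩⟩
  · rintro ⟨i1, i2⟩
    obtain ⟨σ, e1, e2⟩ := glue h3 h3' i1 i2
    exact ⟨σ, by rw [map_sub, e1, e2]⟩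

lemma count_A (n : ℕ) : (Cl (Aset {Op.sub}) n).ncard =
    ∑ k ∈ Finset.Icc 1 (n - 1), (Cl (Aset amd) k).ncard * (Cl (Fset amd) (n - k)).ncard := by
  rw [← XA_a, ncard_image_congr (XA_eq n), XA_b]
  refine ncard_W (fun k => k) (fun k => n - k) (finite_Cl (inv_A _) (AE_A _))
    (finite_Cl (inv_F _) (AE_F _)) (inv_F _) _ ?_
  intro a ha b hb e
  simp only [Finset.coe_Icc, Set.mem_Icc] at ha hb
  dsimp only at e
  omega

lemma count_BC (n : ℕ) : (Cl (Aset {Op.sub}) n).ncard =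
    (Cl (Bset {Op.sub}) n).ncard + (Cl (Cset {Op.sub}) n).ncard := by
  rw [← Set.ncard_union_eq ?_ (finite_Cl (inv_B _) (AE_B _) n) (finite_Cl (inv_C _) (AE_C _) n)]
  · congr 1
    ext α
    constructor
    · rintro ⟨f, ⟨h1, h2⟩, rfl⟩
      have h3 := neg_isAE_sub h1.2
      by_cases hi : Iso f (-f)
      · exact Or.inr ⟨f, ⟨⟨⟨h3.1, h3.2, hi⟩, h1.2⟩, h2⟩, rfl⟩
      · exact Or.inl ⟨f, ⟨⟨⟨h3.1, h3.2, hi⟩, h1.2⟩, h2⟩, rfl⟩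
    · rintro (⟨f, ⟨h1, h2⟩, rfl⟩ | ⟨f, ⟨h1, h2⟩, rfl⟩)
      · exact ⟨f, ⟨⟨h1.1.1, h1.2⟩, h2⟩, rfl⟩
      · exact ⟨f, ⟨⟨h1.1.1, h1.2⟩, h2⟩, rfl⟩
  · rw [Set.disjoint_left]
    rintro α ⟨f, ⟨h1, h2⟩, rfl⟩ h3
    exact h1.1.2.2 ((mem_Cl (inv_C _)).1 h3).1.1.2.2

/-! ### Third type expressions ending with a subtraction -/

/-- Third type expressions, together with zero. -/
def C0 : Set K := Cset amd ∪ {0}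

lemma inv_C0 : PermInv C0 := by
  rintro σ f (h | h)
  · exact Or.inl (inv_C amd σ f h)
  · rw [Set.mem_singleton_iff] at h
    subst h
    exact Or.inr (map_zero _)

lemma C0_sum {c : K} (h : c ∈ C0) : SumOf ZE c := by
  rcases h with h | h
  · exact Cset_amd h
  · rw [Set.mem_singleton_iff] at h
    subst h
    exact SumOf.zero _

lemma C0_iso {c : K} (h : c ∈ C0) : Iso c (-c) := by
  rcases h with h | h
  · exact h.1.2.2
  · rw [Set.mem_singleton_iff] at h
    subst h
    rw [neg_zero]
    exact Iso.refl _

lemma mem_C0 {c : K} (h : SumOf ZE c) (hi : Iso c (-c)) : c ∈ C0 := by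
  by_cases h0 : c = 0
  · exact Or.inr h0
  · have he := h.mono (R := EE) fun _ h => h.1
    have ha := he.isAE EE.isAE h0
    refine Or.inl ⟨⟨ha, ?_, hi⟩, endsIn_amd.2 ⟨he, h0⟩⟩
    obtain ⟨σ, hσ⟩ := hi
    rw [← hσ]
    exact ha.perm σ

lemma Cl_C0 (m : ℕ) : Cl C0 m = if m = 0 then {classOf 0} else Cl (Cset amd) m := by
  split_ifs with h
  · subst h
    ext α
    rw [Set.mem_singleton_iff]
    constructor
    · rintro ⟨f, ⟨h1 | h1, h2⟩, rfl⟩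
      · have := h1.1.1.ncard_pos
        omega
      · rw [Set.mem_singleton_iff] at h1
        rw [h1]
    · rintro rfl
      exact ⟨0, ⟨Or.inr rfl, by rw [Vars_zero]; simp⟩, rfl⟩
  · ext α
    constructor
    · rintro ⟨f, ⟨h1 | h1, h2⟩, rfl⟩
      · exact ⟨f, ⟨h1, h2⟩, rfl⟩
      · rw [Set.mem_singleton_iff] at h1
        subst h1
        rw [Vars_zero] at h2
        simp at h2
        omega
    · rintro ⟨f, ⟨h1, h2⟩, rfl⟩
      exact ⟨f, ⟨Or.inl h1, h2⟩, rfl⟩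

lemma finite_C0 (m : ℕ) : (Cl C0 m).Finite := by
  rw [Cl_C0]
  split_ifs
  · exact Set.finite_singleton _
  · exact finite_Cl (inv_C _) (AE_C _) m

/-- Triples `(p, c, h)` describing third type expressions `p + c - h`. -/
def XC (n : ℕ) : Set (K × K × K) := {x | Iso x.1 x.2.2 ∧ x.2.1 ∈ C0 ∧ x.2.2 ∈ Fset amd ∧
  Disjoint (Vars x.1) (Vars x.2.1) ∧ Disjoint (Vars x.1) (Vars x.2.2) ∧
  Disjoint (Vars x.2.1) (Vars x.2.2) ∧ (Vars x.2.1).ncard + 2 * (Vars x.2.2).ncard = n}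

lemma C_fwd {p c h : K} (hi : Iso p h) (hc : c ∈ C0) (hh : h ∈ Fset amd)
    (d1 : Disjoint (Vars p) (Vars c)) (d2 : Disjoint (Vars p) (Vars h))
    (d3 : Disjoint (Vars c) (Vars h)) : p + c - h ∈ Cset {Op.sub} := by
  have hp : p ∈ Fset amd := (inv_F amd).iso hh hi.symm
  have hs : SumOf EE (p + c) := SumOf.add EE.nonempty d1 ((Fset_amd hp).1.mono fun _ h => h.1)
    ((C0_sum hc).mono fun _ h => h.1)
  have h0 : p + c ≠ 0 := by
    intro h0
    have h1 := ncard_add d1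
    rw [h0, Vars_zero, Set.ncard_empty] at h1
    have := hp.1.1.ncard_pos
    omega
  have he := sub_form.2 ⟨p + c, h, mem_Aset_amd hs h0, hh,
    by rw [Vars_add d1]; exact Set.disjoint_union_left.2 ⟨d2, d3⟩, rfl⟩
  have ha := neg_isAE_sub he
  refine ⟨⟨ha.1, ha.2, ?_⟩, he⟩
  obtain ⟨σ, e1, e2, e3⟩ := glue3 (g' := h) (h' := -c) (k' := p) d1 d2 d3
    (by rw [Vars_neg]; exact d3.symm) d2.symm
    (by rw [Vars_neg]; exact d1.symm) hi (C0_iso hc) hi.symm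
  exact ⟨σ, by rw [map_sub, map_add, e1, e2, e3]; ring⟩

lemma C_bwd {f : K} (hf : f ∈ Cset {Op.sub}) : ∃ p c h, Iso p h ∧ c ∈ C0 ∧ h ∈ Fset amd ∧
    Disjoint (Vars p) (Vars c) ∧ Disjoint (Vars p) (Vars h) ∧ Disjoint (Vars c) (Vars h) ∧
    f = p + c - h := by
  obtain ⟨g, h, h1, h2, h3, rfl⟩ := sub_form.1 hf.2
  obtain ⟨p, c, hp, hc, rfl, d⟩ := EE_split (Aset_amd h1).1
  rw [Vars_add d, Set.disjoint_union_left] at h3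
  obtain ⟨σ, hσ⟩ := hf.1.2.2
  have hh := (Fset_amd h2).1
  have hp' := hp.mono PE.pq
  have hc' := hc.mono ZE.zq
  have hh' := hh.mono PE.pq
  obtain ⟨e1, e2, e3⟩ := unique3 (hp'.perm σ (PQ.perm σ)) (hc'.perm σ (ZQ.perm σ))
    (hh'.perm σ (PQ.perm σ)) (disjoint_perm σ d) (disjoint_perm σ h3.1) (disjoint_perm σ h3.2)
    hh' (hc'.neg ZQ.neg) hp' (by rw [Vars_neg]; exact h3.2.symm) h3.1.symm
    (by rw [Vars_neg]; exact d.symm) (by rw [← map_add, ← map_sub, hσ]; ring)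
  exact ⟨p, c, h, ⟨σ, e1⟩, mem_C0 hc ⟨σ, e2⟩, h2, d, h3.1, h3.2, rfl⟩

lemma ncard3 {p c h : K} (hi : Iso p h) (d1 : Disjoint (Vars p) (Vars c))
    (d2 : Disjoint (Vars p) (Vars h)) (d3 : Disjoint (Vars c) (Vars h)) :
    (Vars (p + c - h)).ncard = (Vars c).ncard + 2 * (Vars h).ncard := by
  rw [ncard_sub (by rw [Vars_add d1]; exact Set.disjoint_union_left.2 ⟨d2, d3⟩), ncard_add d1,
    hi.ncard]
  ring

lemma XC_a (n : ℕ) : (fun x : K × K × K => classOf (x.1 + x.2.1 - x.2.2)) '' XC n =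
    Cl (Cset {Op.sub}) n := by
  ext α
  constructor
  · rintro ⟨⟨p, c, h⟩, ⟨hi, hc, hh, d1, d2, d3, hn⟩, rfl⟩
    exact ⟨_, ⟨C_fwd hi hc hh d1 d2 d3, (ncard3 hi d1 d2 d3).trans hn⟩, rfl⟩
  · rintro ⟨f, ⟨h1, h2⟩, rfl⟩
    obtain ⟨p, c, h, hi, hc, hh, d1, d2, d3, rfl⟩ := C_bwd h1
    exact ⟨(p, c, h), ⟨hi, hc, hh, d1, d2, d3, (ncard3 hi d1 d2 d3).symm.trans h2⟩, rfl⟩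

lemma XC_b (n : ℕ) : (fun x : K × K × K => (classOf x.2.1, classOf x.2.2)) '' XC n =
    {q : Set K × Set K | ∃ k ∈ Finset.Icc 1 (n / 2),
      q.1 ∈ Cl C0 (n - 2 * k) ∧ q.2 ∈ Cl (Fset amd) k} := by
  ext q
  constructor
  · rintro ⟨⟨p, c, h⟩, ⟨hi, hc, hh, d1, d2, d3, hn⟩, rfl⟩
    dsimp only at *
    have p2 := hh.1.1.ncard_pos
    exact ⟨(Vars h).ncard, by rw [Finset.mem_Icc]; omega, ⟨c, ⟨hc, by omega⟩, rfl⟩,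
      h, ⟨hh, rfl⟩, rfl⟩
  · obtain ⟨α, β⟩ := q
    rintro ⟨k, hk, ⟨c, ⟨h1, h2⟩, rfl⟩, ⟨h, ⟨h3, h4⟩, e⟩⟩
    dsimp only at e
    subst e
    rw [Finset.mem_Icc] at hk
    obtain ⟨h', i, d⟩ := exists_iso_disjoint h (Vars_finite c)
    obtain ⟨p, i2, d2⟩ := exists_iso_disjoint h ((Vars_finite c).union (Vars_finite h'))
    rw [Set.disjoint_union_right] at d2
    refine ⟨(p, c, h'), ⟨i2.symm.trans i, h1, (inv_F amd).iso h3 i, d2.1, d2.2, d.symm, ?_⟩, ?_⟩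
    · dsimp only
      rw [← i.ncard]
      omega
    · dsimp only
      rw [classOf_eq.2 i]

lemma XC_eq (n : ℕ) : ∀ x ∈ XC n, ∀ y ∈ XC n,
    (classOf (x.1 + x.2.1 - x.2.2) = classOf (y.1 + y.2.1 - y.2.2) ↔
      ((classOf x.2.1, classOf x.2.2) : Set K × Set K) = (classOf y.2.1, classOf y.2.2)) := by
  rintro ⟨p, c, h⟩ ⟨hi, hc, hh, d1, d2, d3, -⟩ ⟨p', c', h'⟩ ⟨hi', hc', hh', d1', d2', d3', -⟩
  dsimp only at *
  rw [Prod.mk.injEq, classOf_eq, classOf_eq, classOf_eq]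
  constructor
  · rintro ⟨σ, hσ⟩
    rw [map_sub, map_add] at hσ
    have hp := (inv_F amd).iso hh hi.symm
    have hp' := (inv_F amd).iso hh' hi'.symm
    obtain ⟨-, e2, e3⟩ := unique3 ((Fset_amd (inv_F amd σ p hp)).1.mono PE.pq)
      ((C0_sum (inv_C0 σ c hc)).mono ZE.zq) ((Fset_amd (inv_F amd σ h hh)).1.mono PE.pq)
      (disjoint_perm σ d1) (disjoint_perm σ d2) (disjoint_perm σ d3)
      ((Fset_amd hp').1.mono PE.pq) ((C0_sum hc').mono ZE.zq) ((Fset_amd hh').1.mono PE.pq)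
      d1' d2' d3' hσ
    exact ⟨⟨σ, e2⟩, ⟨σ, e3⟩⟩
  · rintro ⟨i1, i2⟩
    obtain ⟨σ, e1, e2, e3⟩ := glue3 d1 d2 d3 d1' d2' d3' (hi.trans (i2.trans hi'.symm)) i1 i2
    exact ⟨σ, by rw [map_sub, map_add, e1, e2, e3]⟩

lemma count_C (n : ℕ) : (Cl (Cset {Op.sub}) n).ncard =
    ∑ k ∈ Finset.Icc 1 (n / 2), (Cl C0 (n - 2 * k)).ncard * (Cl (Fset amd) k).ncard := by
  rw [← XC_a, ncard_image_congr (XC_eq n), XC_b]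
  exact ncard_W (fun k => n - 2 * k) (fun k => k) finite_C0
    (finite_Cl (inv_F _) (AE_F _)) (inv_F _) _ (fun _ _ _ _ e => e)

/-- For `n ≥ 2`:
`|ℱ̄ₙ(−)| = 0`,
`|ℬ̄ₙ(−)| = Σ_{k=1}^{n−1} |𝒜̄_k(+,×,÷)|·|ℱ̄_{n−k}(+,×,÷)| − |𝒞̄ₙ(−)|`, and
`|𝒞̄ₙ(−)| = Σ_{k=1}^{⌊n/2⌋} |𝒞̄_{n−2k}(+,×,÷)|·|ℱ̄_k(+,×,÷)|`,
with the convention `|𝒞̄₀(+,×,÷)| = 1`. -/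
theorem count_minus (n : ℕ) (hn : 2 ≤ n) :
    countClasses (Fset {Op.sub} ∩ AEn n) = 0 ∧
    (countClasses (Bset {Op.sub} ∩ AEn n) : ℤ) =
      (∑ k ∈ Finset.Icc 1 (n - 1),
          countClasses (Aset {Op.add, Op.mul, Op.div} ∩ AEn k) *
            countClasses (Fset {Op.add, Op.mul, Op.div} ∩ AEn (n - k)) : ℤ)
        - countClasses (Cset {Op.sub} ∩ AEn n) ∧
    countClasses (Cset {Op.sub} ∩ AEn n) =
      ∑ k ∈ Finset.Icc 1 (n / 2),
        (if n - 2 * k = 0 then 1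
          else countClasses (Cset {Op.add, Op.mul, Op.div} ∩ AEn (n - 2 * k))) *
          countClasses (Fset {Op.add, Op.mul, Op.div} ∩ AEn k) := by
  change _ ∧ (countClasses (Bset {Op.sub} ∩ AEn n) : ℤ) =
      (∑ k ∈ Finset.Icc 1 (n - 1), countClasses (Aset amd ∩ AEn k) *
        countClasses (Fset amd ∩ AEn (n - k)) : ℤ) - countClasses (Cset {Op.sub} ∩ AEn n) ∧
    countClasses (Cset {Op.sub} ∩ AEn n) = ∑ k ∈ Finset.Icc 1 (n / 2),
      (if n - 2 * k = 0 then 1 else countClasses (Cset amd ∩ AEn (n - 2 * k))) *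
        countClasses (Fset amd ∩ AEn k)
  refine ⟨count_F n, ?_, ?_⟩
  · simp only [count_eq (inv_A _) (AE_A _), count_eq (inv_B _) (AE_B _),
      count_eq (inv_C _) (AE_C _), count_eq (inv_F _) (AE_F _)]
    have h1 := count_A n
    rw [count_BC] at h1
    rw [eq_sub_iff_add_eq]
    exact_mod_cast h1
  · simp only [count_eq (inv_C _) (AE_C _), count_eq (inv_F _) (AE_F _)]
    rw [count_C]
    refine Finset.sum_congr rfl fun k _ => ?_
    rw [Cl_C0]
    split_ifs
    · rw [Set.ncard_singleton]
    · rfl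

end
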